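/- arXiv:2204.14126 — 11 statements merged into one kernel-verified Lean document; each statement's English description precedes it below -/
import Mathlib

section
/- Let 0 < a < 1, b > 1, c = (b-1)/(b-a), and define f : [0,1] → ℝ by f(x) = a·x for x ∈ [0,c] and f(x) = 1 - b·(1-x) for x ∈ (c,1]. Then for every x ∈ [0,1) the limit ℓ(x) := lim_{L→∞} f^[L](x)/a^L exists and is nonnegative; moreover, with β = -log a / log b (> 0), the function x ↦ (1-x)^β · ℓ(x) is bounded above on [0,1), and there exist ε > 0 and δ > 0 such that (1-x)^β · ℓ(x) ≥ δ for all x ∈ (1-ε, 1). In other words, ℓ(x) = R(x)/(1-x)^{-log_b a} with R nonnegative, bounded above, and bounded away from 0 near x = 1. -/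
open Filter Set

/-- If `f` is multiplication by `a ∈ [0, 1]` on `[0, c]`, then so are its iterates, with factor
`a ^ m`. -/
lemma iterate_eq_pow_mul_of_eq_mul_on_Icc {a c : ℝ} (ha : 0 ≤ a) (ha1 : a ≤ 1) {f : ℝ → ℝ}
    (hf : ∀ x ∈ Set.Icc (0 : ℝ) c, f x = a * x) {y : ℝ} (hy : y ∈ Set.Icc 0 c) (m : ℕ) :
    f^[m] y = a ^ m * y := by
  induction m with
  | zero => simp
  | succ m ih =>
    have hmem : a ^ m * y ∈ Set.Icc 0 c :=
      ⟨mul_nonneg (pow_nonneg ha m) hy.1,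
        (mul_le_of_le_one_left hy.1 (pow_le_one₀ ha ha1)).trans hy.2⟩
    rw [Function.iterate_succ_apply', ih, hf _ hmem]
    ring

/-- An orbit that expands away from `1` eventually enters `[0, c]`, at a point `y` which is bounded
below by `a * c` unless the orbit started below that. -/
lemma exists_iterate_mem_Icc {a b c : ℝ} (hac : 0 ≤ a * c) (hb : 0 < b)
    (hbc : 1 - b * (1 - c) = a * c) {f : ℝ → ℝ}
    (hf : ∀ x ∈ Set.Ioc c 1, f x = 1 - b * (1 - x)) (N : ℕ) {x : ℝ} (hx : x ∈ Set.Ico 0 1)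
    (hN : 1 - b ^ N * (1 - x) ≤ c) :
    ∃ n : ℕ, ∃ y ∈ Set.Icc 0 c, min x (a * c) ≤ y ∧ b ^ n * (1 - x) = 1 - y ∧ f^[n] x = y := by
  induction N generalizing x with
  | zero => exact ⟨0, x, ⟨hx.1, by simpa using hN⟩, min_le_left _ _, by simp, rfl⟩
  | succ N ih =>
    rcases le_or_gt x c with hxc | hxc
    · exact ⟨0, x, ⟨hx.1, hxc⟩, min_le_left _ _, by simp, rfl⟩
    have hfx := hf x ⟨hxc, hx.2.le⟩
    have hlow : a * c ≤ f x := by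
      rw [hfx, ← hbc]
      gcongr
    have hlt : f x < 1 := by
      rw [hfx]
      linarith [mul_pos hb (sub_pos.2 hx.2)]
    obtain ⟨n, y, hy, hmin, hpow, hit⟩ := ih ⟨hac.trans hlow, hlt⟩ (by
      rw [hfx]
      convert hN using 1
      ring)
    refine ⟨n + 1, y, hy, ?_, ?_, hit⟩
    · rw [min_eq_right hlow] at hmin
      exact (min_le_right _ _).trans hmin
    · rw [← hpow, hfx]
      ring

/-- With `β = -log_b a`, scaling the distance to `1` by `b ^ n` scales its `β`-th power
by `a⁻¹ ^ n`. -/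
lemma pow_mul_rpow_neg_log_div_log {a b t : ℝ} (ha : 0 < a) (hb : 1 < b) (ht : 0 ≤ t) (n : ℕ) :
    (b ^ n * t) ^ (-Real.log a / Real.log b) = t ^ (-Real.log a / Real.log b) / a ^ n := by
  have hb0 : 0 < b := one_pos.trans hb
  have hlog : Real.log b ≠ 0 := (Real.log_pos hb).ne'
  have hbase : b ^ (-Real.log a / Real.log b) = a⁻¹ := by
    rw [Real.rpow_def_of_pos hb0, mul_div_cancel₀ _ hlog, Real.exp_neg, Real.exp_log ha]
  rw [Real.mul_rpow (by positivity) ht, ← Real.rpow_natCast, ← Real.rpow_mul hb0.le,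
    mul_comm (n : ℝ), Real.rpow_mul hb0.le, hbase,
    Real.rpow_natCast, inv_pow, inv_mul_eq_div]

/-- Iterating the piecewise linear map `f(x) = a·x` on `[0,c]`, `f(x) = 1 - b(1-x)` on `(c,1]`
(with `0 < a < 1 < b`, `c = (b-1)/(b-a)`) and normalizing by `a^L` yields a function with a
singularity of order `-log_b a` at `x = 1`:
`lim_L f^[L](x)/a^L = R(x)/(1-x)^{-log_b a}` with `R` nonnegative, bounded above, and
bounded away from `0` near `x = 1`. -/
theorem piecewise_linear_iteration_singularity
    (a b c : ℝ) (ha : 0 < a) (ha1 : a < 1) (hb : 1 < b)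
    (hc : c = (b - 1) / (b - a)) (f : ℝ → ℝ)
    (hf1 : ∀ x ∈ Set.Icc (0 : ℝ) c, f x = a * x)
    (hf2 : ∀ x ∈ Set.Ioc c 1, f x = 1 - b * (1 - x)) :
    ∃ ℓ : ℝ → ℝ,
      (∀ x ∈ Set.Ico (0 : ℝ) 1,
        Tendsto (fun L => f^[L] x / a ^ L) atTop (nhds (ℓ x)) ∧ 0 ≤ ℓ x) ∧
      (∃ Cb : ℝ, ∀ x ∈ Set.Ico (0 : ℝ) 1,
        (1 - x) ^ (-Real.log a / Real.log b) * ℓ x ≤ Cb) ∧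
      (∃ ε > (0 : ℝ), ∃ δ > (0 : ℝ), ∀ x ∈ Set.Ioo (1 - ε) 1,
        δ ≤ (1 - x) ^ (-Real.log a / Real.log b) * ℓ x) := by
  have hba : 0 < b - a := by linarith
  have hc0 : 0 < c := hc ▸ div_pos (by linarith) hba
  have hc1 : c < 1 := by
    rw [hc, div_lt_one hba]
    linarith
  have hbc : 1 - b * (1 - c) = a * c := by
    rw [hc]
    field_simp
    ring
  have hβ : 0 ≤ -Real.log a / Real.log b :=
    div_nonneg (neg_nonneg.2 (Real.log_nonpos ha.le ha1.le)) (Real.log_pos hb).le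
  have key : ∀ x ∈ Set.Ico (0 : ℝ) 1, ∃ n : ℕ, ∃ y ∈ Set.Icc 0 c, min x (a * c) ≤ y ∧
      Tendsto (fun L => f^[L] x / a ^ L) atTop (nhds (y / a ^ n)) ∧
      (1 - x) ^ (-Real.log a / Real.log b) * (y / a ^ n) =
        (1 - y) ^ (-Real.log a / Real.log b) * y := by
    intro x hx
    have hx1 : 0 < 1 - x := sub_pos.2 hx.2
    obtain ⟨N, hN⟩ := pow_unbounded_of_one_lt ((1 - c) / (1 - x)) hb
    rw [div_lt_iff₀ hx1] at hN
    obtain ⟨n, y, hy, hmin, hpow, hit⟩ := exists_iterate_mem_Icc (mul_pos ha hc0).le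
      (one_pos.trans hb) hbc hf2 N hx (by linarith)
    refine ⟨n, y, hy, hmin, ?_, ?_⟩
    · rw [← tendsto_add_atTop_iff_nat n]
      refine tendsto_const_nhds.congr fun m => ?_
      rw [Function.iterate_add_apply, hit,
        iterate_eq_pow_mul_of_eq_mul_on_Icc ha.le ha1.le hf1 hy, pow_add,
        mul_div_mul_left _ _ (pow_pos ha m).ne']
    · rw [← hpow, pow_mul_rpow_neg_log_div_log ha hb hx1.le]
      ring
  choose! n y hy hmin hlim hscale using key
  refine ⟨fun x => y x / a ^ n x,
    fun x hx => ⟨hlim x hx, div_nonneg (hy x hx).1 (pow_pos ha _).le⟩, ⟨1, fun x hx => ?_⟩,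
    1 - c, sub_pos.2 hc1, (1 - c) ^ (-Real.log a / Real.log b) * (a * c),
    mul_pos (Real.rpow_pos_of_pos (sub_pos.2 hc1) _) (mul_pos ha hc0), fun x hx => ?_⟩
  · obtain ⟨hy0, hyc⟩ := hy x hx
    rw [hscale x hx]
    exact mul_le_one₀ (Real.rpow_le_one (by linarith) (by linarith) hβ) hy0 (by linarith)
  · have hxc : c < x := by linarith [hx.1]
    have hx' : x ∈ Set.Ico (0 : ℝ) 1 := ⟨(hc0.trans hxc).le, hx.2⟩
    have hacx : a * c ≤ x := (mul_le_of_le_one_left hc0.le ha1.le).trans hxc.le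
    have hlow := hmin x hx'
    rw [min_eq_right hacx] at hlow
    have hyc := (hy x hx').2
    rw [hscale x hx']
    have h1c : 0 ≤ 1 - c := (sub_pos.2 hc1).le
    have h1y : 0 ≤ 1 - y x := by linarith
    gcongr
end

section
/- Let f be given on [0,1] by a convergent power series f(z) = ∑_{i=0}^∞ a_i z^i with a_i ≥ 0 for all i, satisfying a_0 = 0 (f(0) = 0), ∑_{i≥1} a_i = 1 (f(1) = 1), 0 < a_1 < 1 (i.e. 0 < f'(0) < 1), and ∑_i i·a_i < ∞ (i.e. f'(1) < ∞). Then for every z ∈ [0,1) the limit ψ(z) := lim_{L→∞} K_L(z)/(a_1^L·(L+1)) exists and is finite with ψ(z) ≥ z, and ψ has a singularity at 1: for every M > 0 there exists z_0 ∈ (0,1) such that ψ(z) > M for all z ∈ (z_0,1). -/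
open Filter Set

/-- If `v (L + 1) = u (L + 1) + v L * r L`, where `u` converges to `h` and the partial products
of `r ≥ 1` converge, then `v L / (L + 1)` converges to `h`. -/
lemma tendsto_div_of_affine_recurrence {u v r : ℕ → ℝ} {h p : ℝ}
    (hv0 : v 0 = u 0) (hv : ∀ L, v (L + 1) = u (L + 1) + v L * r L) (hr : ∀ L, 1 ≤ r L)
    (hu : Tendsto u atTop (nhds h))
    (hp : Tendsto (fun L => ∏ j ∈ Finset.range L, r j) atTop (nhds p)) :
    Tendsto (fun L : ℕ => v L / ((L : ℝ) + 1)) atTop (nhds h) := by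
  set P : ℕ → ℝ := fun L => ∏ j ∈ Finset.range L, r j with hP
  have hP1 : ∀ L, 1 ≤ P L := fun L => Finset.one_le_prod fun j _ => hr j
  have hp1 : 1 ≤ p := ge_of_tendsto' hp hP1
  have hPsucc : ∀ L, P (L + 1) = P L * r L := fun L => Finset.prod_range_succ _ _
  have hvP : ∀ L, v L = P L * ∑ j ∈ Finset.range (L + 1), u j / P j := by
    intro L
    induction L with
    | zero => simp [hP, hv0]
    | succ L ih =>
      have : P (L + 1) ≠ 0 := (zero_lt_one.trans_le (hP1 _)).ne'
      rw [hv, ih, Finset.sum_range_succ _ (L + 1), mul_add, mul_div_cancel₀ _ this, hPsucc]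
      ring
  have hces := ((hu.div hp (by positivity)).cesaro.comp (tendsto_add_atTop_nat 1))
  have hlim := hp.mul hces
  rw [mul_div_cancel₀ _ (by positivity)] at hlim
  refine hlim.congr fun L => ?_
  simp only [Function.comp, Pi.div_apply, hvP L]
  push_cast
  field_simp

section PowerSeries

variable {a : ℕ → ℝ} {s x : ℝ}

lemma linear_term_le_of_hasSum (ha : ∀ i, 0 ≤ a i) (hx : 0 ≤ x)
    (hs : HasSum (fun i => a i * x ^ i) s) : a 1 * x ≤ s := by
  simpa using le_hasSum hs 1 fun i _ => mul_nonneg (ha i) (pow_nonneg hx i)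

lemma linear_coeff_le_of_hasSum_deriv (ha : ∀ i, 0 ≤ a i) (hx : 0 ≤ x)
    (hs : HasSum (fun i : ℕ => (i : ℝ) * a i * x ^ (i - 1)) s) : a 1 ≤ s := by
  simpa using le_hasSum hs 1 fun i _ =>
    mul_nonneg (mul_nonneg i.cast_nonneg (ha i)) (pow_nonneg hx (i - 1))

lemma hasSum_deriv_le (ha : ∀ i, 0 ≤ a i) (hx : 0 ≤ x) (hx1 : x ≤ 1) {B : ℝ}
    (hB : HasSum (fun i : ℕ => (i : ℝ) * a i) B)
    (hs : HasSum (fun i : ℕ => (i : ℝ) * a i * x ^ (i - 1)) s) : s ≤ a 1 + B * x := by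
  refine hasSum_le (fun i => ?_) hs ((hasSum_ite_eq 1 (a 1)).add (hB.mul_right x))
  rcases i with _ | _ | i
  · simp
  · simpa using mul_nonneg (ha 1) hx
  · have hpow : x ^ (i + 1) ≤ x := by
      simpa using pow_le_pow_of_le_one hx hx1 (Nat.le_add_left 1 i)
    simpa using mul_le_mul_of_nonneg_left hpow
      (mul_nonneg (Nat.cast_nonneg (i + 1 + 1)) (ha (i + 1 + 1)))

lemma hasSum_le_mul_quadratic (ha : ∀ i, 0 ≤ a i) (ha0 : a 0 = 0) (hone : HasSum a 1)
    (hx : 0 ≤ x) (hx1 : x ≤ 1) (hs : HasSum (fun i => a i * x ^ i) s) :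
    s ≤ (a 1 + (1 - a 1) * x) * x := by
  have key : s ≤ a 1 * (x - x ^ 2) + 1 * x ^ 2 := by
    refine hasSum_le (fun i => ?_) hs
      ((hasSum_ite_eq 1 (a 1 * (x - x ^ 2))).add (hone.mul_right (x ^ 2)))
    rcases i with _ | _ | i
    · simp [ha0]
    · simp only [zero_add, if_true, pow_one]
      linarith
    · simpa using mul_le_mul_of_nonneg_left
        (pow_le_pow_of_le_one hx hx1 (Nat.le_add_left 2 i)) (ha (i + 2))
  linarith

lemma hasSum_le_mul_hasSum_deriv (ha : ∀ i, 0 ≤ a i) (ha0 : a 0 = 0) (hx : 0 ≤ x) {s' : ℝ}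
    (hs : HasSum (fun i => a i * x ^ i) s)
    (hs' : HasSum (fun i : ℕ => (i : ℝ) * a i * x ^ (i - 1)) s') : s ≤ s' * x := by
  refine hasSum_le (fun i => ?_) hs (hs'.mul_right x)
  rcases i with _ | i
  · simp [ha0]
  · have hnn : 0 ≤ (i : ℝ) * (a (i + 1) * x ^ (i + 1)) :=
      mul_nonneg i.cast_nonneg (mul_nonneg (ha _) (pow_nonneg hx _))
    simp only [Nat.add_sub_cancel, Nat.cast_add, Nat.cast_one]
    rw [pow_succ] at hnn ⊢
    linarith

lemma one_sub_hasSum_le (ha : ∀ i, 0 ≤ a i) (hone : HasSum a 1) (hx : 0 ≤ x) {B : ℝ}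
    (hB : HasSum (fun i : ℕ => (i : ℝ) * a i) B)
    (hs : HasSum (fun i => a i * x ^ i) s) : 1 - s ≤ B * (1 - x) := by
  refine hasSum_le (fun i => ?_) (hone.sub hs) (hB.mul_right (1 - x))
  have hbern := one_add_mul_le_pow (a := x - 1) (by linarith) i
  rw [add_sub_cancel] at hbern
  have := mul_le_mul_of_nonneg_left hbern (ha i)
  linarith

end PowerSeries

/-- For a dual activation `f(z) = ∑ aᵢ zⁱ` with nonnegative coefficients, `f(0) = 0`,
`f(1) = 1`, `0 < f'(0) = a₁ < 1` and `f'(1) = ∑ i·aᵢ < ∞`, the normalized NTK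
`K_L(z)/(a₁^L (L+1))` converges pointwise on `[0,1)` to a finite limit `ψ(z) ≥ z`,
and `ψ` has a singularity at `1`: it exceeds any `M > 0` near `z = 1`. -/
theorem normalized_NTK_converges_to_singular_kernel
    (a : ℕ → ℝ) (f f' : ℝ → ℝ) (K : ℕ → ℝ → ℝ)
    (ha : ∀ i, 0 ≤ a i)
    (hf : ∀ z ∈ Set.Icc (0 : ℝ) 1, HasSum (fun i => a i * z ^ i) (f z))
    (hf' : ∀ z ∈ Set.Icc (0 : ℝ) 1, HasSum (fun i : ℕ => (i : ℝ) * a i * z ^ (i - 1)) (f' z))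
    (ha0 : a 0 = 0) (hone : HasSum a 1)
    (ha1 : 0 < a 1) (ha1' : a 1 < 1)
    (hsum' : Summable (fun i : ℕ => (i : ℝ) * a i))
    (hK0 : ∀ z, K 0 z = z)
    (hKrec : ∀ L z, K (L + 1) z = f^[L + 1] z + K L z * f' (f^[L] z)) :
    ∃ ψ : ℝ → ℝ,
      (∀ z ∈ Set.Ico (0 : ℝ) 1,
        Tendsto (fun L : ℕ => K L z / (a 1 ^ L * ((L : ℝ) + 1))) atTop (nhds (ψ z)) ∧
        z ≤ ψ z) ∧
      (∀ M > (0 : ℝ), ∃ z₀ ∈ Set.Ioo (0 : ℝ) 1, ∀ z ∈ Set.Ioo z₀ 1, M < ψ z) := by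
  obtain ⟨B, hB⟩ := hsum'
  have hB0 : 0 ≤ B := hB.nonneg fun i => mul_nonneg i.cast_nonneg (ha i)
  have hmaps : MapsTo f (Icc 0 1) (Icc 0 1) := by
    intro x hx
    have hlow := linear_term_le_of_hasSum ha hx.1 (hf x hx)
    have hup := hasSum_le_mul_quadratic ha ha0 hone hx.1 hx.2 (hf x hx)
    refine ⟨(mul_nonneg ha1.le hx.1).trans hlow, hup.trans ?_⟩
    exact mul_le_one₀ (by nlinarith [hx.2]) hx.1 hx.2
  have hiter : ∀ L, ∀ z ∈ Icc (0 : ℝ) 1, f^[L] z ∈ Icc (0 : ℝ) 1 :=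
    fun L z hz => hmaps.iterate L hz
  have hlim : ∀ z ∈ Ico (0 : ℝ) 1, ∃ l : ℝ,
      Tendsto (fun L : ℕ => K L z / (a 1 ^ L * ((L : ℝ) + 1))) atTop (nhds l) ∧
        ∀ L, f^[L] z / a 1 ^ L ≤ l := by
    intro z hz
    have hx : ∀ L, f^[L] z ∈ Icc (0 : ℝ) 1 := fun L => hiter L z ⟨hz.1, hz.2.le⟩
    set q : ℝ := a 1 + (1 - a 1) * z with hq
    have hq0 : 0 ≤ q := add_nonneg ha1.le (mul_nonneg (by linarith) hz.1)
    have hq1 : q < 1 := by nlinarith [hz.2]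
    have hdecay : ∀ L, f^[L] z ≤ q ^ L * z := by
      intro L
      induction L with
      | zero => simp
      | succ L ih =>
        rw [Function.iterate_succ_apply']
        have hle : f^[L] z ≤ z :=
          ih.trans (mul_le_of_le_one_left hz.1 (pow_le_one₀ hq0 hq1.le))
        calc f (f^[L] z) ≤ (a 1 + (1 - a 1) * f^[L] z) * f^[L] z :=
              hasSum_le_mul_quadratic ha ha0 hone (hx L).1 (hx L).2 (hf _ (hx L))
          _ ≤ q * (q ^ L * z) :=
              mul_le_mul (by nlinarith) ih (hx L).1 hq0
          _ = q ^ (L + 1) * z := by ring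
    set r : ℕ → ℝ := fun L => f' (f^[L] z) / a 1 with hrdef
    have hr : ∀ L, 1 ≤ r L := fun L =>
      (one_le_div ha1).2 (linear_coeff_le_of_hasSum_deriv ha (hx L).1 (hf' _ (hx L)))
    have hrsum : Summable fun L => r L - 1 := by
      refine Summable.of_nonneg_of_le (fun L => sub_nonneg.2 (hr L)) (fun L => ?_)
        ((summable_geometric_of_lt_one hq0 hq1).mul_left (B * z / a 1))
      have hder := hasSum_deriv_le ha (hx L).1 (hx L).2 hB (hf' _ (hx L))
      have hBx := mul_le_mul_of_nonneg_left (hdecay L) hB0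
      rw [hrdef, div_sub_one ha1.ne', div_mul_eq_mul_div]
      gcongr
      linarith
    obtain ⟨p, hprod⟩ : Multipliable r := by
      simpa using Real.multipliable_one_add_of_summable hrsum
    have hp := hprod.tendsto_prod_nat
    have hPmono : Monotone fun L => ∏ j ∈ Finset.range L, r j := monotone_nat_of_le_succ fun L => by
      rw [Finset.prod_range_succ]
      exact le_mul_of_one_le_right
        (zero_le_one.trans (Finset.one_le_prod fun j _ => hr j)) (hr L)
    set u : ℕ → ℝ := fun L => f^[L] z / a 1 ^ L with hudef
    have humono : Monotone u := monotone_nat_of_le_succ fun L => by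
      have := linear_term_le_of_hasSum ha (hx L).1 (hf _ (hx L))
      simp only [hudef]
      rw [Function.iterate_succ_apply', div_le_div_iff₀ (by positivity) (by positivity), pow_succ]
      have := mul_le_mul_of_nonneg_left this (pow_nonneg ha1.le L)
      linarith
    have huP : ∀ L, u L ≤ ∏ j ∈ Finset.range L, r j := by
      intro L
      induction L with
      | zero => simpa [hudef] using hz.2.le
      | succ L ih =>
        have hle := hasSum_le_mul_hasSum_deriv ha ha0 (hx L).1 (hf _ (hx L)) (hf' _ (hx L))
        rw [Finset.prod_range_succ]
        calc u (L + 1) ≤ f' (f^[L] z) * f^[L] z / a 1 ^ (L + 1) := by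
              simp only [hudef]
              rw [Function.iterate_succ_apply']
              gcongr
          _ = u L * r L := by
              simp only [hudef, hrdef]
              rw [div_mul_div_comm, pow_succ, mul_comm (f' _)]
          _ ≤ _ := mul_le_mul_of_nonneg_right ih (zero_le_one.trans (hr L))
    have hbdd : BddAbove (range u) :=
      ⟨p, forall_mem_range.2 fun L => (huP L).trans (hPmono.ge_of_tendsto hp L)⟩
    refine ⟨⨆ L, u L, ?_, fun L => le_ciSup hbdd L⟩
    have := tendsto_div_of_affine_recurrence (v := fun L => K L z / a 1 ^ L) (u := u) (r := r)
      (by simp [hudef, hK0])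
      (fun L => by
        simp only [hudef, hrdef]
        rw [hKrec, add_div, div_mul_div_comm, pow_succ])
      hr (tendsto_atTop_ciSup humono hbdd) hp
    simpa only [div_div] using this
  choose! ψ hψ using hlim
  refine ⟨ψ, fun z hz => ⟨(hψ z hz).1, by simpa using (hψ z hz).2 0⟩, fun M hM => ?_⟩
  have hnear : ∀ L, ∀ z ∈ Icc (0 : ℝ) 1, 1 - f^[L] z ≤ B ^ L * (1 - z) := by
    intro L z hz
    induction L with
    | zero => simp
    | succ L ih =>
      rw [Function.iterate_succ_apply', pow_succ', mul_assoc]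
      exact (one_sub_hasSum_le ha hone (hiter L z hz).1 hB (hf _ (hiter L z hz))).trans
        (mul_le_mul_of_nonneg_left ih hB0)
  obtain ⟨L, hL⟩ := exists_pow_lt_of_lt_one (show 0 < 1 / (2 * M) by positivity) ha1'
  rw [lt_div_iff₀ (by positivity)] at hL
  have hBL : 0 ≤ B ^ L := pow_nonneg hB0 L
  refine ⟨1 - 1 / (2 * (B ^ L + 1)), ⟨?_, ?_⟩, fun z hz => ?_⟩
  · rw [sub_pos, div_lt_one (by positivity)]
    linarith
  · exact sub_lt_self _ (by positivity)
  · have hz0 : 0 < z := by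
      refine lt_of_le_of_lt ?_ hz.1
      rw [sub_nonneg, div_le_one (by positivity)]
      linarith
    refine lt_of_lt_of_le ?_ ((hψ z ⟨hz0.le, hz.2⟩).2 L)
    have hclose : (1 - z) * (2 * (B ^ L + 1)) < 1 := by
      rw [← lt_div_iff₀ (by positivity)]
      linarith [hz.1]
    have := hnear L z ⟨hz0.le, hz.2.le⟩
    rw [lt_div_iff₀ (by positivity)]
    nlinarith [hz.2]
end

section
/- Let f be given on [0,1] by a convergent power series f(z) = ∑_{i=0}^∞ a_i z^i with a_i ≥ 0 for all i, satisfying a_0 = 0, ∑_{i≥1} a_i = 1, and 0 < a_1 < 1. Then for every integer i ≥ 0 and every z ∈ [0,1]: a_1^i · z · ∏_{j=0}^{i-1} (1 + (a_2/a_1)·f^[j](z)) ≤ f^[i](z) ≤ a_1^i · z · ∏_{j=0}^{i-1} (1 + (1/a_1 - 1)·f^[j](z)). -/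
open Filter Set

/-- A power series with nonnegative coefficients dominates its linear and quadratic terms. -/
lemma linear_add_quadratic_le_of_hasSum {a : ℕ → ℝ} {z s : ℝ} (ha : ∀ i, 0 ≤ a i) (hz : 0 ≤ z)
    (hs : HasSum (fun i => a i * z ^ i) s) : a 1 * z + a 2 * z ^ 2 ≤ s := by
  have h := sum_le_hasSum {1, 2} (fun i _ => mul_nonneg (ha i) (pow_nonneg hz i)) hs
  simpa using h

/-- On `[0, 1]`, a power series with nonnegative coefficients of total mass `1` and no constant
term is at most the quadratic polynomial obtained by moving all the mass of degree at least `2`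
to degree `2`. -/
lemma hasSum_le_linear_add_quadratic {a : ℕ → ℝ} {z s : ℝ} (ha : ∀ i, 0 ≤ a i) (ha0 : a 0 = 0)
    (hone : HasSum a 1) (hz : z ∈ Set.Icc (0 : ℝ) 1)
    (hs : HasSum (fun i => a i * z ^ i) s) : s ≤ a 1 * z + (1 - a 1) * z ^ 2 := by
  have h := (hone.mul_right (z ^ 2)).add (hasSum_ite_eq 1 (a 1 * (z - z ^ 2)))
  have hle : s ≤ 1 * z ^ 2 + a 1 * (z - z ^ 2) := by
    refine hasSum_le (fun i => ?_) hs h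
    match i with
    | 0 => simp [ha0]
    | 1 => simp only [if_true]; linarith
    | n + 2 =>
      have hpow : z ^ (n + 2) ≤ z ^ 2 := pow_le_pow_of_le_one hz.1 hz.2 (by omega)
      simpa using mul_le_mul_of_nonneg_left hpow (ha (n + 2))
  linarith

/-- Quadratic/linear bounds on the iterates of a dual activation `f(z) = ∑ aᵢ zⁱ`
(nonnegative coefficients, `f(0)=0`, `f(1)=1`, `0 < a₁ < 1`): for all `i` and `z ∈ [0,1]`,
`a₁^i z ∏_{j<i} (1 + (a₂/a₁) f^[j](z)) ≤ f^[i](z) ≤ a₁^i z ∏_{j<i} (1 + (1/a₁ - 1) f^[j](z))`. -/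
theorem iterated_dual_activation_bounds
    (a : ℕ → ℝ) (f : ℝ → ℝ)
    (ha : ∀ i, 0 ≤ a i)
    (hf : ∀ z ∈ Set.Icc (0 : ℝ) 1, HasSum (fun i => a i * z ^ i) (f z))
    (ha0 : a 0 = 0) (hone : HasSum a 1)
    (ha1 : 0 < a 1) (ha1' : a 1 < 1) :
    ∀ (i : ℕ), ∀ z ∈ Set.Icc (0 : ℝ) 1,
      a 1 ^ i * z * ∏ j ∈ Finset.range i, (1 + (a 2 / a 1) * f^[j] z) ≤ f^[i] z ∧
      f^[i] z ≤ a 1 ^ i * z * ∏ j ∈ Finset.range i, (1 + (1 / a 1 - 1) * f^[j] z) := by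
  have hlow : ∀ z ∈ Set.Icc (0 : ℝ) 1, a 1 * z + a 2 * z ^ 2 ≤ f z := fun z hz =>
    linear_add_quadratic_le_of_hasSum ha hz.1 (hf z hz)
  have hupp : ∀ z ∈ Set.Icc (0 : ℝ) 1, f z ≤ a 1 * z + (1 - a 1) * z ^ 2 := fun z hz =>
    hasSum_le_linear_add_quadratic ha ha0 hone hz (hf z hz)
  have hmaps : Set.MapsTo f (Set.Icc 0 1) (Set.Icc 0 1) := fun z hz =>
    ⟨(hf z hz).nonneg fun i => mul_nonneg (ha i) (pow_nonneg hz.1 i),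
      hasSum_le (fun i => mul_le_of_le_one_right (ha i) (pow_le_one₀ hz.1 hz.2)) (hf z hz) hone⟩
  intro i z hz
  induction i with
  | zero => simp
  | succ n ih =>
    obtain ⟨ihl, ihu⟩ := ih
    have hw : f^[n] z ∈ Set.Icc (0 : ℝ) 1 := hmaps.iterate n hz
    have hl := hlow _ hw
    have hu := hupp _ hw
    rw [Finset.prod_range_succ, Finset.prod_range_succ, Function.iterate_succ_apply']
    have hcl : 0 ≤ a 1 * (1 + a 2 / a 1 * f^[n] z) :=
      mul_nonneg ha1.le (add_nonneg zero_le_one (mul_nonneg (div_nonneg (ha 2) ha1.le) hw.1))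
    have hcu : 0 ≤ a 1 * (1 + (1 / a 1 - 1) * f^[n] z) :=
      mul_nonneg ha1.le (add_nonneg zero_le_one (mul_nonneg
        (sub_nonneg.2 (one_le_one_div ha1 ha1'.le)) hw.1))
    constructor
    · calc _ = a 1 ^ n * z * (∏ j ∈ Finset.range n, (1 + a 2 / a 1 * f^[j] z)) *
            (a 1 * (1 + a 2 / a 1 * f^[n] z)) := by ring
        _ ≤ f^[n] z * (a 1 * (1 + a 2 / a 1 * f^[n] z)) := mul_le_mul_of_nonneg_right ihl hcl
        _ = a 1 * f^[n] z + a 2 * f^[n] z ^ 2 := by field_simp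
        _ ≤ _ := hl
    · calc _ ≤ a 1 * f^[n] z + (1 - a 1) * f^[n] z ^ 2 := hu
        _ = f^[n] z * (a 1 * (1 + (1 / a 1 - 1) * f^[n] z)) := by field_simp
        _ ≤ a 1 ^ n * z * (∏ j ∈ Finset.range n, (1 + (1 / a 1 - 1) * f^[j] z)) *
            (a 1 * (1 + (1 / a 1 - 1) * f^[n] z)) := mul_le_mul_of_nonneg_right ihu hcu
        _ = _ := by ring
end

section
/- Let f be given on [0,1] by a convergent power series f(z) = ∑_{i=0}^∞ a_i z^i with a_i ≥ 0 for all i, satisfying a_0 = 0, ∑_{i≥1} a_i = 1, 0 < a_1 < 1, and C := ∑_i i·a_i < ∞ (so C = f'(1) ≥ 1). Then for every integer L ≥ 0 and every z ∈ [0,1]: (L+1)·a_1^L · z · ∏_{j=0}^{L-1} (1 + (a_2/a_1)·f^[j](z)) ≤ K_L(z) ≤ (L+1)·a_1^L · z · ∏_{j=0}^{L-1} (1 + (C/a_1 - 1)·f^[j](z)). -/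
open Filter Set

section PowerSeries

variable {a : ℕ → ℝ} {w s : ℝ}

lemma hasSum_pow_mem_Icc (ha : ∀ i, 0 ≤ a i) (hone : HasSum a 1) (hw : w ∈ Icc (0 : ℝ) 1)
    (hs : HasSum (fun i => a i * w ^ i) s) : s ∈ Icc (0 : ℝ) 1 :=
  ⟨hs.nonneg fun i => mul_nonneg (ha i) (pow_nonneg hw.1 i),
    hasSum_le (fun i => mul_le_of_le_one_right (ha i) (pow_le_one₀ hw.1 hw.2)) hs hone⟩

lemma le_hasSum_pow (ha : ∀ i, 0 ≤ a i) (hw : w ∈ Icc (0 : ℝ) 1)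
    (hs : HasSum (fun i => a i * w ^ i) s) : a 1 * w + a 2 * w ^ 2 ≤ s := by
  have h := sum_le_hasSum {1, 2} (fun i _ => mul_nonneg (ha i) (pow_nonneg hw.1 i)) hs
  simpa using h

lemma le_hasSum_deriv (ha : ∀ i, 0 ≤ a i) (hw : w ∈ Icc (0 : ℝ) 1)
    (hs : HasSum (fun i : ℕ => (i : ℝ) * a i * w ^ (i - 1)) s) : a 1 + a 2 * w ≤ s := by
  have h := sum_le_hasSum {1, 2} (fun i _ =>
    mul_nonneg (mul_nonneg (Nat.cast_nonneg i) (ha i)) (pow_nonneg hw.1 (i - 1))) hs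
  have h2 := mul_nonneg (ha 2) hw.1
  simp at h
  linarith

lemma hasSum_pow_le {C : ℝ} (ha : ∀ i, 0 ≤ a i) (ha0 : a 0 = 0)
    (hC : HasSum (fun i : ℕ => (i : ℝ) * a i) C) (hw : w ∈ Icc (0 : ℝ) 1)
    (hs : HasSum (fun i => a i * w ^ i) s) : s ≤ a 1 * w + (C - a 1) * w ^ 2 := by
  have hmaj := (hC.mul_right (w ^ 2)).add (hasSum_ite_eq 1 (a 1 * (w - w ^ 2)))
  refine (hasSum_le (fun i => ?_) hs hmaj).trans_eq (by ring)
  match i with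
  | 0 => simp [ha0]
  | 1 => simp; linarith
  | n + 2 =>
    have hpow : w ^ (n + 2) ≤ w ^ 2 := pow_le_pow_of_le_one hw.1 hw.2 (by omega)
    have hcoef : a (n + 2) ≤ ((n + 2 : ℕ) : ℝ) * a (n + 2) :=
      le_mul_of_one_le_left (ha _) (by exact_mod_cast (by omega : 1 ≤ n + 2))
    have h := mul_le_mul hcoef hpow (pow_nonneg hw.1 _) ((ha _).trans hcoef)
    simpa using h

lemma hasSum_deriv_le_s5 {C : ℝ} (ha : ∀ i, 0 ≤ a i)
    (hC : HasSum (fun i : ℕ => (i : ℝ) * a i) C) (hw : w ∈ Icc (0 : ℝ) 1)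
    (hs : HasSum (fun i : ℕ => (i : ℝ) * a i * w ^ (i - 1)) s) : s ≤ a 1 + (C - a 1) * w := by
  have hmaj := (hC.mul_right w).add (hasSum_ite_eq 1 (a 1 * (1 - w)))
  refine (hasSum_le (fun i => ?_) hs hmaj).trans_eq (by ring)
  match i with
  | 0 => simp
  | 1 => simp; linarith
  | n + 2 =>
    have hpow : w ^ (n + 1) ≤ w := pow_le_of_le_one hw.1 hw.2 (by omega)
    have h := mul_le_mul_of_nonneg_left hpow
      (mul_nonneg (Nat.cast_nonneg (n + 2)) (ha (n + 2)))
    simpa using h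

end PowerSeries

section Recursion

variable {x κ d q : ℕ → ℝ} {b : ℝ}

/-- If `x` and the recursion `κ (L + 1) = x (L + 1) + κ L * d L` both grow at least by the factors
`b * q L`, then `κ L` is at least `L + 1` times the product of these factors. -/
lemma prod_le_of_recursion (hb : 0 ≤ b) (hq : ∀ L, 0 ≤ q L) (hx0 : 0 ≤ x 0)
    (hx : ∀ L, x L * (b * q L) ≤ x (L + 1)) (hd : ∀ L, b * q L ≤ d L)
    (hκ0 : κ 0 = x 0) (hκ : ∀ L, κ (L + 1) = x (L + 1) + κ L * d L) (L : ℕ) :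
    ((L : ℝ) + 1) * b ^ L * x 0 * ∏ j ∈ Finset.range L, q j ≤ κ L := by
  have hP (L : ℕ) : 0 ≤ b ^ L * x 0 * ∏ j ∈ Finset.range L, q j :=
    mul_nonneg (mul_nonneg (pow_nonneg hb L) hx0) (Finset.prod_nonneg fun j _ => hq j)
  have hbq (L : ℕ) : 0 ≤ b * q L := mul_nonneg hb (hq L)
  have hxP (L : ℕ) : b ^ L * x 0 * ∏ j ∈ Finset.range L, q j ≤ x L := by
    induction L with
    | zero => simp
    | succ L ih =>
      refine le_trans (le_of_eq ?_) ((mul_le_mul_of_nonneg_right ih (hbq L)).trans (hx L))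
      rw [Finset.prod_range_succ]; ring
  induction L with
  | zero => simp [hκ0]
  | succ L ih =>
    have hκL : 0 ≤ κ L := by
      refine le_trans ?_ ih
      have := mul_nonneg (by positivity : (0 : ℝ) ≤ (L : ℝ) + 1) (hP L)
      linarith
    have h := add_le_add (hxP (L + 1))
      ((mul_le_mul_of_nonneg_right ih (hbq L)).trans (mul_le_mul_of_nonneg_left (hd L) hκL))
    rw [← hκ] at h
    refine le_trans (le_of_eq ?_) h
    rw [Finset.prod_range_succ]; push_cast; ring

/-- If `x` and the recursion `κ (L + 1) = x (L + 1) + κ L * d L` both grow at most by the factors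
`b * q L`, then `κ L` is at most `L + 1` times the product of these factors. -/
lemma le_prod_of_recursion (hx0 : 0 ≤ x 0) (hd0 : ∀ L, 0 ≤ d L)
    (hx : ∀ L, x (L + 1) ≤ x L * (b * q L)) (hd : ∀ L, d L ≤ b * q L)
    (hκ0 : κ 0 = x 0) (hκ : ∀ L, κ (L + 1) = x (L + 1) + κ L * d L) (L : ℕ) :
    κ L ≤ ((L : ℝ) + 1) * b ^ L * x 0 * ∏ j ∈ Finset.range L, q j := by
  have hbq (L : ℕ) : 0 ≤ b * q L := (hd0 L).trans (hd L)
  have hxP (L : ℕ) : x L ≤ b ^ L * x 0 * ∏ j ∈ Finset.range L, q j := by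
    induction L with
    | zero => simp
    | succ L ih =>
      refine ((hx L).trans (mul_le_mul_of_nonneg_right ih (hbq L))).trans_eq ?_
      rw [Finset.prod_range_succ]; ring
  have hP (L : ℕ) : 0 ≤ b ^ L * x 0 * ∏ j ∈ Finset.range L, q j := by
    induction L with
    | zero => simpa
    | succ L ih =>
      refine (mul_nonneg ih (hbq L)).trans_eq ?_
      rw [Finset.prod_range_succ]; ring
  induction L with
  | zero => simp [hκ0]
  | succ L ih =>
    have hB : 0 ≤ ((L : ℝ) + 1) * b ^ L * x 0 * ∏ j ∈ Finset.range L, q j := by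
      have := mul_nonneg (by positivity : (0 : ℝ) ≤ (L : ℝ) + 1) (hP L)
      linarith
    have h := add_le_add (hxP (L + 1))
      ((mul_le_mul_of_nonneg_right ih (hd0 L)).trans (mul_le_mul_of_nonneg_left (hd L) hB))
    rw [← hκ] at h
    refine h.trans_eq ?_
    rw [Finset.prod_range_succ]; push_cast; ring

end Recursion

/-- Bounds on the depth-`L` NTK `K_L` of a dual activation `f(z) = ∑ aᵢ zⁱ`
(nonnegative coefficients, `f(0)=0`, `f(1)=1`, `0 < a₁ < 1`, `C = f'(1) = ∑ i·aᵢ < ∞`):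
for all `L` and `z ∈ [0,1]`,
`(L+1) a₁^L z ∏_{j<L} (1 + (a₂/a₁) f^[j](z)) ≤ K_L(z)
  ≤ (L+1) a₁^L z ∏_{j<L} (1 + (C/a₁ - 1) f^[j](z))`. -/
theorem NTK_product_bounds
    (a : ℕ → ℝ) (f f' : ℝ → ℝ) (K : ℕ → ℝ → ℝ) (C : ℝ)
    (ha : ∀ i, 0 ≤ a i)
    (hf : ∀ z ∈ Set.Icc (0 : ℝ) 1, HasSum (fun i => a i * z ^ i) (f z))
    (hf' : ∀ z ∈ Set.Icc (0 : ℝ) 1, HasSum (fun i : ℕ => (i : ℝ) * a i * z ^ (i - 1)) (f' z))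
    (ha0 : a 0 = 0) (hone : HasSum a 1)
    (ha1 : 0 < a 1) (ha1' : a 1 < 1)
    (hC : HasSum (fun i : ℕ => (i : ℝ) * a i) C)
    (hK0 : ∀ z, K 0 z = z)
    (hKrec : ∀ L z, K (L + 1) z = f^[L + 1] z + K L z * f' (f^[L] z)) :
    ∀ (L : ℕ), ∀ z ∈ Set.Icc (0 : ℝ) 1,
      ((L : ℝ) + 1) * a 1 ^ L * z * ∏ j ∈ Finset.range L, (1 + (a 2 / a 1) * f^[j] z)
          ≤ K L z ∧
      K L z ≤ ((L : ℝ) + 1) * a 1 ^ L * z * ∏ j ∈ Finset.range L, (1 + (C / a 1 - 1) * f^[j] z) := by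
  intro L z hz
  have hmem (n : ℕ) : f^[n] z ∈ Icc (0 : ℝ) 1 := by
    induction n with
    | zero => simpa using hz
    | succ n ih =>
      rw [Function.iterate_succ_apply']
      exact hasSum_pow_mem_Icc ha hone ih (hf _ ih)
  have hfactor (c w : ℝ) : a 1 * (1 + c / a 1 * w) = a 1 + c * w := by
    field_simp
  have hfactor' (w : ℝ) : a 1 * (1 + (C / a 1 - 1) * w) = a 1 + (C - a 1) * w := by
    field_simp
  constructor
  · refine prod_le_of_recursion (x := fun n => f^[n] z) (κ := fun n => K n z)
      (d := fun n => f' (f^[n] z)) (q := fun n => 1 + a 2 / a 1 * f^[n] z) ha1.le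
      (fun n => ?_) hz.1 (fun n => ?_) (fun n => ?_) (hK0 z) (fun n => hKrec n z) L
    · have := mul_nonneg (div_nonneg (ha 2) ha1.le) (hmem n).1
      linarith
    · have := le_hasSum_pow ha (hmem n) (hf _ (hmem n))
      simp only [Function.iterate_succ_apply', hfactor]
      linarith
    · simpa only [hfactor] using le_hasSum_deriv ha (hmem n) (hf' _ (hmem n))
  · refine le_prod_of_recursion (x := fun n => f^[n] z) (κ := fun n => K n z)
      (d := fun n => f' (f^[n] z)) (q := fun n => 1 + (C / a 1 - 1) * f^[n] z)
      hz.1 (fun n => ?_) (fun n => ?_) (fun n => ?_) (hK0 z) (fun n => hKrec n z) L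
    · exact (hf' _ (hmem n)).nonneg fun i =>
        mul_nonneg (mul_nonneg (Nat.cast_nonneg i) (ha i)) (pow_nonneg (hmem n).1 _)
    · have := hasSum_pow_le ha ha0 hC (hmem n) (hf _ (hmem n))
      simp only [Function.iterate_succ_apply', hfactor']
      linarith
    · simpa only [hfactor'] using hasSum_deriv_le_s5 ha hC (hmem n) (hf' _ (hmem n))
end

section
/- Let f be given on [0,1] by a convergent power series f(z) = ∑_{i=0}^∞ a_i z^i with a_i ≥ 0 for all i, satisfying a_0 = 0, ∑_{i≥1} a_i = 1, 0 < a_1 < 1, and ∑_i i·a_i < ∞. Then for every integer L ≥ 0 and every z ∈ [0,1]: K_L(z) ≥ (L+1)·f^[L](z). -/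
open Filter Set

/-- A power series with nonnegative coefficients of total sum `1` maps `[0,1]` to itself. -/
lemma mapsTo_Icc_of_hasSum_pow {a : ℕ → ℝ} {f : ℝ → ℝ} (ha : ∀ i, 0 ≤ a i)
    (hf : ∀ z ∈ Set.Icc (0 : ℝ) 1, HasSum (fun i => a i * z ^ i) (f z)) (hone : HasSum a 1) :
    Set.MapsTo f (Set.Icc 0 1) (Set.Icc 0 1) := fun z hz =>
  ⟨(hf z hz).nonneg fun i => mul_nonneg (ha i) (pow_nonneg hz.1 i),
    hasSum_le (fun i => mul_le_of_le_one_right (ha i) (pow_le_one₀ hz.1 hz.2)) (hf z hz) hone⟩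

/-- A power series `s` with nonnegative coefficients and no constant term satisfies
`s(z) ≤ z * s'(z)` for `z ≥ 0`. -/
lemma hasSum_pow_le_mul_deriv {a : ℕ → ℝ} {z s s' : ℝ} (ha : ∀ i, 0 ≤ a i) (ha0 : a 0 = 0)
    (hz : 0 ≤ z) (hs : HasSum (fun i => a i * z ^ i) s)
    (hs' : HasSum (fun i : ℕ => (i : ℝ) * a i * z ^ (i - 1)) s') : s ≤ z * s' := by
  refine hasSum_le (fun i => ?_) hs (hs'.mul_left z)
  rcases i with _ | i
  · simp [ha0]
  · have h : 0 ≤ (i : ℝ) * (a (i + 1) * z ^ (i + 1)) :=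
      mul_nonneg i.cast_nonneg (mul_nonneg (ha _) (pow_nonneg hz _))
    simp only [Nat.add_sub_cancel, Nat.cast_add, Nat.cast_one]
    linarith [
      show z * (((i : ℝ) + 1) * a (i + 1) * z ^ i)
        = (i : ℝ) * (a (i + 1) * z ^ (i + 1)) + a (i + 1) * z ^ (i + 1) by ring]

/-- For a dual activation `f(z) = ∑ aᵢ zⁱ` with nonnegative coefficients, `f(0)=0`, `f(1)=1`,
`0 < a₁ < 1` and `∑ i·aᵢ < ∞`, the depth-`L` NTK satisfies `K_L(z) ≥ (L+1)·f^[L](z)`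
for all `L ≥ 0` and `z ∈ [0,1]`. -/
theorem NTK_ge_iterated_dual_activation
    (a : ℕ → ℝ) (f f' : ℝ → ℝ) (K : ℕ → ℝ → ℝ)
    (ha : ∀ i, 0 ≤ a i)
    (hf : ∀ z ∈ Set.Icc (0 : ℝ) 1, HasSum (fun i => a i * z ^ i) (f z))
    (hf' : ∀ z ∈ Set.Icc (0 : ℝ) 1, HasSum (fun i : ℕ => (i : ℝ) * a i * z ^ (i - 1)) (f' z))
    (ha0 : a 0 = 0) (hone : HasSum a 1)
    (ha1 : 0 < a 1) (ha1' : a 1 < 1)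
    (hsum' : Summable (fun i : ℕ => (i : ℝ) * a i))
    (hK0 : ∀ z, K 0 z = z)
    (hKrec : ∀ L z, K (L + 1) z = f^[L + 1] z + K L z * f' (f^[L] z)) :
    ∀ (L : ℕ), ∀ z ∈ Set.Icc (0 : ℝ) 1, ((L : ℝ) + 1) * f^[L] z ≤ K L z := by
  intro L z hz
  induction L with
  | zero => simp [hK0]
  | succ L ih =>
    have hw : f^[L] z ∈ Set.Icc (0 : ℝ) 1 := (mapsTo_Icc_of_hasSum_pow ha hf hone).iterate L hz
    have hle := hasSum_pow_le_mul_deriv ha ha0 hw.1 (hf _ hw) (hf' _ hw)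
    have hnonneg : 0 ≤ f' (f^[L] z) := (hf' _ hw).nonneg fun i =>
      mul_nonneg (mul_nonneg i.cast_nonneg (ha i)) (pow_nonneg hw.1 _)
    rw [hKrec, Function.iterate_succ_apply']
    push_cast
    calc ((L : ℝ) + 1 + 1) * f (f^[L] z)
        = f (f^[L] z) + ((L : ℝ) + 1) * f (f^[L] z) := by ring
      _ ≤ f (f^[L] z) + ((L : ℝ) + 1) * (f^[L] z * f' (f^[L] z)) := by gcongr
      _ = f (f^[L] z) + ((L : ℝ) + 1) * f^[L] z * f' (f^[L] z) := by ring
      _ ≤ f (f^[L] z) + K L z * f' (f^[L] z) := by gcongr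
end

section
/- Let f be given on [0,1] by a convergent power series f(z) = ∑_{i=0}^∞ a_i z^i with a_i ≥ 0 for all i, satisfying a_0 = a_1 = 0 (f(0) = 0 and f'(0) = 0), a_2 > 0, ∑_{i≥2} a_i = 1 (f(1) = 1), and ∑_i i·a_i < ∞ (f'(1) < ∞). Then for every L ≥ 0 there exists a function g_L that is positive and monotonically increasing on (0,1] such that K_L(z) = z^{2^L}·g_L(z) for all z ∈ (0,1]; consequently, for all z', z with 0 < z' < z ≤ 1, lim_{L→∞} K_L(z')/K_L(z) = 0. -/
open Filter Set

/-- `h` is `z ^ n` times a positive monotone function on `(0, 1]`. -/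
def HasMonotoneFactor (n : ℕ) (h : ℝ → ℝ) : Prop :=
  ∃ g : ℝ → ℝ, (∀ z ∈ Set.Ioc (0 : ℝ) 1, 0 < g z) ∧ MonotoneOn g (Set.Ioc 0 1) ∧
    ∀ z ∈ Set.Ioc (0 : ℝ) 1, h z = z ^ n * g z

namespace HasMonotoneFactor

variable {m n : ℕ} {h k : ℝ → ℝ}

theorem pos (hh : HasMonotoneFactor n h) {z : ℝ} (hz : z ∈ Set.Ioc (0 : ℝ) 1) : 0 < h z := by
  obtain ⟨g, hg, -, he⟩ := hh
  rw [he z hz]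
  exact mul_pos (pow_pos hz.1 n) (hg z hz)

theorem monotoneOn (hh : HasMonotoneFactor n h) : MonotoneOn h (Set.Ioc 0 1) := by
  obtain ⟨g, hg, hm, he⟩ := hh
  intro x hx y hy hxy
  rw [he x hx, he y hy]
  exact mul_le_mul (pow_le_pow_left₀ hx.1.le hxy n) (hm hx hy hxy) (hg x hx).le
    (pow_pos hy.1 n).le

theorem add (hh : HasMonotoneFactor n h) (hk : HasMonotoneFactor n k) :
    HasMonotoneFactor n (fun z => h z + k z) := by
  obtain ⟨g, hg, hm, he⟩ := hh
  obtain ⟨g', hg', hm', he'⟩ := hk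
  refine ⟨fun z => g z + g' z, fun z hz => add_pos (hg z hz) (hg' z hz), hm.add hm',
    fun z hz => ?_⟩
  simp only [he z hz, he' z hz]
  ring

theorem mul (hh : HasMonotoneFactor m h) (hk : HasMonotoneFactor n k) :
    HasMonotoneFactor (m + n) (fun z => h z * k z) := by
  obtain ⟨g, hg, hm, he⟩ := hh
  obtain ⟨g', hg', hm', he'⟩ := hk
  refine ⟨fun z => g z * g' z, fun z hz => mul_pos (hg z hz) (hg' z hz), ?_, fun z hz => ?_⟩
  · intro x hx y hy hxy
    exact mul_le_mul (hm hx hy hxy) (hm' hx hy hxy) (hg' x hx).le (hg y hy).le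
  · simp only [he z hz, he' z hz]
    ring

theorem comp (hh : HasMonotoneFactor m h) (hk : HasMonotoneFactor n k)
    (hmaps : MapsTo k (Set.Ioc 0 1) (Set.Ioc 0 1)) :
    HasMonotoneFactor (n * m) (fun z => h (k z)) := by
  have hkm := hk.monotoneOn
  obtain ⟨g, hg, hm, he⟩ := hh
  obtain ⟨g', hg', hm', he'⟩ := hk
  refine ⟨fun z => g' z ^ m * g (k z),
    fun z hz => mul_pos (pow_pos (hg' z hz) m) (hg _ (hmaps hz)), ?_, fun z hz => ?_⟩
  · intro x hx y hy hxy
    exact mul_le_mul (pow_le_pow_left₀ (hg' x hx).le (hm' hx hy hxy) m)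
      (hm (hmaps hx) (hmaps hy) (hkm hx hy hxy)) (hg _ (hmaps hx)).le
      (pow_pos (hg' y hy) m).le
  · beta_reduce
    rw [he _ (hmaps hz), pow_mul, ← mul_assoc, ← mul_pow, ← he' z hz]

/-- A sum of monomials of degree at least `n` with nonnegative coefficients, not all zero. -/
theorem of_hasSum {b : ℕ → ℝ} {e : ℕ → ℕ} (hb : ∀ i, 0 ≤ b i) {j : ℕ} (hj : 0 < b j)
    (hbe : ∀ i, b i ≠ 0 → n ≤ e i)
    (hs : ∀ z ∈ Set.Icc (0 : ℝ) 1, HasSum (fun i => b i * z ^ e i) (h z)) :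
    HasMonotoneFactor n h := by
  have hs' : ∀ z ∈ Set.Ioc (0 : ℝ) 1, HasSum (fun i => b i * z ^ (e i - n)) (h z / z ^ n) := by
    intro z hz
    have hd := (hs z ⟨hz.1.le, hz.2⟩).div_const (z ^ n)
    refine (funext fun i => ?_ : (fun i => b i * z ^ e i / z ^ n) =
      fun i => b i * z ^ (e i - n)) ▸ hd
    by_cases hi : b i = 0
    · simp [hi]
    · rw [pow_sub₀ z hz.1.ne' (hbe i hi), mul_div_assoc, div_eq_mul_inv]
  refine ⟨fun z => h z / z ^ n, fun z hz => ?_, fun x hx y hy hxy => ?_, fun z hz => ?_⟩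
  · have hterm : 0 < b j * z ^ (e j - n) := mul_pos hj (pow_pos hz.1 _)
    exact hterm.trans_le
      (le_hasSum (hs' z hz) j fun i _ => mul_nonneg (hb i) (pow_pos hz.1 _).le)
  · exact hasSum_le (fun i => mul_le_mul_of_nonneg_left
      (pow_le_pow_left₀ hx.1.le hxy _) (hb i)) (hs' x hx) (hs' y hy)
  · exact (mul_div_cancel₀ (h z) (pow_pos hz.1 n).ne').symm

theorem iterate (hh : HasMonotoneFactor n h) (hmaps : MapsTo h (Set.Ioc 0 1) (Set.Ioc 0 1))
    (L : ℕ) : HasMonotoneFactor (n ^ L) h^[L] := by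
  induction L with
  | zero => exact ⟨fun _ => 1, fun _ _ => one_pos, monotoneOn_const, fun z _ => by simp⟩
  | succ L ih =>
    rw [Function.iterate_succ', pow_succ]
    exact hh.comp ih (hmaps.iterate L)

theorem div_le_div_pow (hh : HasMonotoneFactor n h) {x y : ℝ} (hx : x ∈ Set.Ioc (0 : ℝ) 1)
    (hy : y ∈ Set.Ioc (0 : ℝ) 1) (hxy : x ≤ y) : h x / h y ≤ (x / y) ^ n := by
  obtain ⟨g, hg, hm, he⟩ := hh
  rw [he x hx, he y hy, mul_div_mul_comm, ← div_pow]
  exact mul_le_of_le_one_right (pow_nonneg (div_nonneg hx.1.le hy.1.le) n)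
    ((div_le_one (hg y hy)).2 (hm hx hy hxy))

end HasMonotoneFactor

/-- For a dual activation `f(z) = ∑ aᵢ zⁱ` with nonnegative coefficients,
`f(0) = f'(0) = 0` (i.e. `a₀ = a₁ = 0`), `a₂ > 0`, `f(1) = 1`, and `f'(1) < ∞`,
the depth-`L` NTK factors as `K_L(z) = z^{2^L}·g_L(z)` on `(0,1]` with `g_L` positive and
monotonically increasing; consequently `K_L(z')/K_L(z) → 0` whenever `0 < z' < z ≤ 1`. -/
theorem NTK_one_nearest_neighbor_factorization
    (a : ℕ → ℝ) (f f' : ℝ → ℝ) (K : ℕ → ℝ → ℝ)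
    (ha : ∀ i, 0 ≤ a i)
    (hf : ∀ z ∈ Set.Icc (0 : ℝ) 1, HasSum (fun i => a i * z ^ i) (f z))
    (hf' : ∀ z ∈ Set.Icc (0 : ℝ) 1, HasSum (fun i : ℕ => (i : ℝ) * a i * z ^ (i - 1)) (f' z))
    (ha0 : a 0 = 0) (ha1 : a 1 = 0) (ha2 : 0 < a 2) (hone : HasSum a 1)
    (hsum' : Summable (fun i : ℕ => (i : ℝ) * a i))
    (hK0 : ∀ z, K 0 z = z)
    (hKrec : ∀ L z, K (L + 1) z = f^[L + 1] z + K L z * f' (f^[L] z)) :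
    (∀ L : ℕ, ∃ g : ℝ → ℝ,
      (∀ z ∈ Set.Ioc (0 : ℝ) 1, 0 < g z) ∧ MonotoneOn g (Set.Ioc 0 1) ∧
      ∀ z ∈ Set.Ioc (0 : ℝ) 1, K L z = z ^ (2 ^ L) * g z) ∧
    (∀ z' z : ℝ, 0 < z' → z' < z → z ≤ 1 →
      Tendsto (fun L : ℕ => K L z' / K L z) atTop (nhds 0)) := by
  have hfF : HasMonotoneFactor 2 f := by
    refine .of_hasSum ha ha2 (fun i hi => ?_) hf
    rcases i with _ | _ | i
    · exact absurd ha0 hi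
    · exact absurd ha1 hi
    · omega
  have hfF' : HasMonotoneFactor 1 f' := by
    refine .of_hasSum (j := 2) (fun i => mul_nonneg i.cast_nonneg (ha i))
      (mul_pos (by norm_num) ha2) (fun i hi => ?_) hf'
    rcases i with _ | _ | i
    · simp at hi
    · simp [ha1] at hi
    · omega
  have hmaps : MapsTo f (Set.Ioc 0 1) (Set.Ioc 0 1) := fun z hz =>
    ⟨hfF.pos hz, hasSum_le (fun i => mul_le_of_le_one_right (ha i)
      (pow_le_one₀ hz.1.le hz.2)) (hf z ⟨hz.1.le, hz.2⟩) hone⟩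
  have hK : ∀ L, HasMonotoneFactor (2 ^ L) (K L) := by
    intro L
    induction L with
    | zero =>
      exact ⟨fun _ => 1, fun _ _ => one_pos, monotoneOn_const, fun z _ => by simp [hK0]⟩
    | succ L ih =>
      have hcomp := hfF'.comp (hfF.iterate hmaps L) (hmaps.iterate L)
      have hprod := ih.mul hcomp
      rw [mul_one, ← mul_two, ← pow_succ] at hprod
      rw [funext (hKrec L)]
      exact (hfF.iterate hmaps (L + 1)).add hprod
  refine ⟨hK, fun z' z hz' hlt hz => ?_⟩
  have hmem' : z' ∈ Set.Ioc (0 : ℝ) 1 := ⟨hz', hlt.le.trans hz⟩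
  have hmem : z ∈ Set.Ioc (0 : ℝ) 1 := ⟨hz'.trans hlt, hz⟩
  have hpow : Tendsto (fun L : ℕ => (z' / z) ^ 2 ^ L) atTop (nhds 0) :=
    (tendsto_pow_atTop_nhds_zero_of_lt_one (div_nonneg hz'.le hmem.1.le)
      ((div_lt_one hmem.1).2 hlt)).comp (tendsto_pow_atTop_atTop_of_one_lt one_lt_two)
  exact squeeze_zero (fun L => (div_pos ((hK L).pos hmem') ((hK L).pos hmem)).le)
    (fun L => (hK L).div_le_div_pow hmem' hmem hlt.le) hpow
end

section
/- Let n ≥ 1, let y ∈ {-1,1}^n with ∑_{i=1}^n y_i ≠ 0, and let C_1, C_2 ∈ ℝ with 0 < C_1 < C_2. Let C : ℕ → ℝ with C(L) > 0 for all L, let (G_L)_{L∈ℕ} be a sequence of real n×n matrices and (v_L)_{L∈ℕ} a sequence of vectors in ℝ^n such that, as L → ∞: (G_L)_{ij}/C(L) → C_1 for all i ≠ j, (G_L)_{ii}/C(L) → C_2 for all i, and (v_L)_i/C(L) → C_1 for all i. Then for all sufficiently large L the matrix G_L is invertible, lim_{L→∞} y·G_L^{-1}·v_L = (C_1/(C_2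 - C_1 + C_1·n))·∑_{i=1}^n y_i, and consequently lim_{L→∞} sign(y·G_L^{-1}·v_L) = sign(∑_{i=1}^n y_i). That is, the limiting kernel machine classifier is the majority vote classifier. -/
open Filter Set Matrix

/-- The square matrix with diagonal entries `b` and all other entries `a`. -/
def equicorrelated (ι : Type*) [DecidableEq ι] (a b : ℝ) : Matrix ι ι ℝ :=
  Matrix.of fun i j => if i = j then b else a

theorem equicorrelated_mulVec {ι : Type*} [Fintype ι] [DecidableEq ι] (a b : ℝ) (x : ι → ℝ) :
    equicorrelated ι a b *ᵥ x = fun i => (b - a) * x i + a * ∑ j, x j := by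
  ext i
  have h : ∀ j, (if i = j then b else a) * x j
      = (if i = j then (b - a) * x j else 0) + a * x j := by
    intro j
    split_ifs <;> ring
  simp [equicorrelated, Matrix.mulVec, dotProduct, h, Finset.sum_add_distrib, Finset.mul_sum]

theorem isUnit_det_equicorrelated {ι : Type*} [Fintype ι] [DecidableEq ι] {a b : ℝ}
    (ha : 0 < a) (hab : a < b) : IsUnit (equicorrelated ι a b).det := by
  rw [← Matrix.isUnit_iff_isUnit_det, ← Matrix.mulVec_injective_iff_isUnit]
  refine (injective_iff_map_eq_zero (equicorrelated ι a b).mulVecLin).2 fun x hx => ?_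
  rw [Matrix.mulVecLin_apply, equicorrelated_mulVec] at hx
  have hx' : ∀ i, (b - a) * x i + a * ∑ j, x j = 0 := fun i => congrFun hx i
  have hsum : (b - a + a * Fintype.card ι) * ∑ j, x j = 0 := by
    have h := Finset.sum_eq_zero fun i (_ : i ∈ Finset.univ) => hx' i
    rw [Finset.sum_add_distrib, ← Finset.mul_sum, Finset.sum_const, nsmul_eq_mul,
      Finset.card_univ] at h
    linear_combination h
  have hba : 0 < b - a := sub_pos.2 hab
  have hpos : 0 < b - a + a * Fintype.card ι := by positivity
  have hzero := (mul_eq_zero.1 hsum).resolve_left hpos.ne'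
  ext i
  simpa [hzero, hba.ne'] using hx' i

theorem equicorrelated_inv_mulVec_const {ι : Type*} [Fintype ι] [DecidableEq ι] {a b : ℝ}
    (ha : 0 < a) (hab : a < b) (c : ℝ) :
    (equicorrelated ι a b)⁻¹ *ᵥ (fun _ => c) = fun _ => c / (b - a + a * Fintype.card ι) := by
  have hba : 0 < b - a := sub_pos.2 hab
  have hpos : 0 < b - a + a * Fintype.card ι := by positivity
  have h : equicorrelated ι a b *ᵥ (fun _ => c / (b - a + a * Fintype.card ι)) = fun _ => c := by
    rw [equicorrelated_mulVec]
    ext i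
    rw [Finset.sum_const, nsmul_eq_mul, Finset.card_univ]
    field_simp
  rw [← h, Matrix.mulVec_mulVec, Matrix.nonsing_inv_mul _ (isUnit_det_equicorrelated ha hab),
    Matrix.one_mulVec]

theorem tendsto_matrix_inv {α ι : Type*} [Fintype ι] [DecidableEq ι] {l : Filter α}
    {A : α → Matrix ι ι ℝ} {M : Matrix ι ι ℝ} (hA : Tendsto A l (nhds M)) (hM : IsUnit M.det) :
    Tendsto (fun x => (A x)⁻¹) l (nhds M⁻¹) := by
  simp only [Matrix.inv_def, Ring.inverse_eq_inv']
  exact ((continuous_id.matrix_det.tendsto M).comp hA |>.inv₀ hM.ne_zero).smul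
    ((continuous_id.matrix_adjugate.tendsto M).comp hA)

theorem tendsto_real_sign {α : Type*} {l : Filter α} {f : α → ℝ} {a : ℝ}
    (hf : Tendsto f l (nhds a)) (ha : a ≠ 0) :
    Tendsto (fun x => Real.sign (f x)) l (nhds (Real.sign a)) := by
  refine tendsto_const_nhds.congr' ?_
  rcases ha.lt_or_gt with h | h
  · filter_upwards [hf.eventually_lt_const h] with x hx
    rw [Real.sign_of_neg h, Real.sign_of_neg hx]
  · filter_upwards [hf.eventually_const_lt h] with x hx
    rw [Real.sign_of_pos h, Real.sign_of_pos hx]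

theorem real_sign_mul_of_pos {c : ℝ} (hc : 0 < c) (s : ℝ) : Real.sign (c * s) = Real.sign s := by
  rcases lt_trichotomy s 0 with h | rfl | h
  · rw [Real.sign_of_neg h, Real.sign_of_neg (mul_neg_of_pos_of_neg hc h)]
  · rw [mul_zero]
  · rw [Real.sign_of_pos h, Real.sign_of_pos (mul_pos hc h)]

/-- Proposition 1 of the paper (finite-diagonal-limit case): if the normalized Gram matrices
have off-diagonal entries tending to `C₁`, diagonal entries tending to `C₂ > C₁ > 0`, and test
vector entries tending to `C₁`, then for all large `L` the Gram matrix is invertible,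
`y G_L⁻¹ v_L → (C₁/(C₂ - C₁ + C₁ n)) ∑ yᵢ`, and hence the limiting kernel machine classifier
is the majority vote classifier `sign(∑ yᵢ)`. -/
theorem limiting_kernel_machine_is_majority_vote
    (n : ℕ) (hn : 1 ≤ n) (y : Fin n → ℝ) (hy : ∀ i, y i = 1 ∨ y i = -1)
    (hysum : ∑ i, y i ≠ 0)
    (C1 C2 : ℝ) (hC1 : 0 < C1) (hC12 : C1 < C2)
    (C : ℕ → ℝ) (hC : ∀ L, 0 < C L)
    (G : ℕ → Matrix (Fin n) (Fin n) ℝ) (v : ℕ → Fin n → ℝ)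
    (hGoff : ∀ i j, i ≠ j → Tendsto (fun L => G L i j / C L) atTop (nhds C1))
    (hGdiag : ∀ i, Tendsto (fun L => G L i i / C L) atTop (nhds C2))
    (hv : ∀ i, Tendsto (fun L => v L i / C L) atTop (nhds C1)) :
    (∃ L₀ : ℕ, ∀ L ≥ L₀, IsUnit (G L).det) ∧
    Tendsto (fun L : ℕ => y ⬝ᵥ ((G L)⁻¹ *ᵥ v L)) atTop
      (nhds ((C1 / (C2 - C1 + C1 * (n : ℝ))) * ∑ i, y i)) ∧
    Tendsto (fun L : ℕ => Real.sign (y ⬝ᵥ ((G L)⁻¹ *ᵥ v L))) atTop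
      (nhds (Real.sign (∑ i, y i))) := by
  have hM := isUnit_det_equicorrelated (ι := Fin n) hC1 hC12
  have hA : Tendsto (fun L => (C L)⁻¹ • G L) atTop (nhds (equicorrelated (Fin n) C1 C2)) := by
    refine tendsto_pi_nhds.2 fun i => tendsto_pi_nhds.2 fun j => ?_
    by_cases hij : i = j
    · subst hij
      simpa [equicorrelated, div_eq_inv_mul] using hGdiag i
    · simpa [equicorrelated, hij, div_eq_inv_mul] using hGoff i j hij
  have hw : Tendsto (fun L => (C L)⁻¹ • v L) atTop (nhds fun _ => C1) :=
    tendsto_pi_nhds.2 fun i => by simpa [div_eq_inv_mul] using hv i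
  have hunit : ∀ᶠ L in atTop, IsUnit (G L).det := by
    have hdet := (continuous_id.matrix_det.tendsto (equicorrelated (Fin n) C1 C2)).comp hA
    filter_upwards [hdet.eventually_ne hM.ne_zero] with L hL
    simp only [Function.comp_apply, id_eq, Matrix.det_smul] at hL
    exact isUnit_iff_ne_zero.2 (right_ne_zero_of_mul hL)
  have hcoef : 0 < C1 / (C2 - C1 + C1 * (n : ℝ)) := by
    have := sub_pos.2 hC12
    positivity
  have hlim : Tendsto (fun L : ℕ => y ⬝ᵥ ((G L)⁻¹ *ᵥ v L)) atTop
      (nhds ((C1 / (C2 - C1 + C1 * (n : ℝ))) * ∑ i, y i)) := by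
    have hcont : Continuous fun p : Matrix (Fin n) (Fin n) ℝ × (Fin n → ℝ) =>
        y ⬝ᵥ (p.1 *ᵥ p.2) :=
      continuous_const.dotProduct (continuous_fst.matrix_mulVec continuous_snd)
    have h := (hcont.tendsto _).comp ((tendsto_matrix_inv hA hM).prodMk_nhds hw)
    have hval : y ⬝ᵥ ((equicorrelated (Fin n) C1 C2)⁻¹ *ᵥ fun _ => C1)
        = (C1 / (C2 - C1 + C1 * (n : ℝ))) * ∑ i, y i := by
      rw [equicorrelated_inv_mulVec_const hC1 hC12, Fintype.card_fin, dotProduct,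
        ← Finset.sum_mul, mul_comm]
    rw [← hval]
    refine h.congr' ?_
    filter_upwards [hunit] with L hL
    have hinv : ((C L)⁻¹ • G L)⁻¹ = C L • (G L)⁻¹ := by
      refine Matrix.inv_eq_left_inv ?_
      rw [Matrix.smul_mul, Matrix.mul_smul, smul_smul, mul_inv_cancel₀ (hC L).ne', one_smul,
        Matrix.nonsing_inv_mul _ hL]
    simp only [Function.comp_apply, hinv]
    rw [Matrix.smul_mulVec, Matrix.mulVec_smul, smul_smul, mul_inv_cancel₀ (hC L).ne', one_smul]
  refine ⟨eventually_atTop.1 hunit, hlim, ?_⟩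
  rw [← real_sign_mul_of_pos hcoef]
  exact tendsto_real_sign hlim (mul_ne_zero hcoef.ne' hysum)
end

section
/- Let f be given on [0,1] by a convergent power series f(z) = ∑_{i=0}^∞ a_i z^i with a_i ≥ 0 for all i, satisfying a_0 > 0 (f(0) > 0), ∑_i a_i = 1 (f(1) = 1), and 1 < ∑_i i·a_i < ∞ (1 < f'(1) < ∞). Then there exists a unique c ∈ (0,1) with f(c) = c; this c satisfies f'(c) < 1; and for every z ∈ [0,1), the iterates converge: lim_{L→∞} f^[L](z) = c. -/
open Filter Set

/-- A convergent orbit of a continuous self-map of a closed set converges to the unique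
fixed point of the map, if there is one. -/
lemma tendsto_iterate_of_unique_fixedPoint {X : Type*} [TopologicalSpace X] [T2Space X]
    {K : Set X} {f : X → X} {c z l : X} (hK : IsClosed K) (hcont : ContinuousOn f K)
    (hmaps : MapsTo f K K) (huniq : ∀ x ∈ K, f x = x → x = c) (hz : z ∈ K)
    (hl : Tendsto (fun L : ℕ => f^[L] z) atTop (nhds l)) :
    Tendsto (fun L : ℕ => f^[L] z) atTop (nhds c) := by
  have hmem : ∀ L, f^[L] z ∈ K := fun L => hmaps.iterate L hz
  have hlK : l ∈ K := hK.mem_of_tendsto hl (Eventually.of_forall hmem)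
  have hfl : Tendsto (fun L : ℕ => f (f^[L] z)) atTop (nhds (f l)) :=
    (hcont l hlK).tendsto.comp
      (tendsto_nhdsWithin_iff.2 ⟨hl, Eventually.of_forall hmem⟩)
  have hfl' : Tendsto (fun L : ℕ => f (f^[L] z)) atTop (nhds l) := by
    simpa only [Function.comp_def, Function.iterate_succ_apply'] using
      hl.comp (tendsto_add_atTop_nat 1)
  rwa [← huniq l hlK (tendsto_nhds_unique hfl hfl')]

/-- If a continuous self-map of a real interval never decreases its argument, its orbits converge
to its unique fixed point. -/
lemma tendsto_iterate_of_le_map {p q c z : ℝ} {f : ℝ → ℝ} (hcont : ContinuousOn f (Icc p q))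
    (hmaps : MapsTo f (Icc p q) (Icc p q)) (huniq : ∀ x ∈ Icc p q, f x = x → x = c)
    (hz : z ∈ Icc p q) (hle : ∀ x ∈ Icc p q, x ≤ f x) :
    Tendsto (fun L : ℕ => f^[L] z) atTop (nhds c) := by
  have hmem : ∀ L, f^[L] z ∈ Icc p q := fun L => hmaps.iterate L hz
  refine tendsto_iterate_of_unique_fixedPoint isClosed_Icc hcont hmaps huniq hz
    (tendsto_atTop_ciSup (monotone_nat_of_le_succ fun L => ?_)
      ⟨q, by rintro _ ⟨L, rfl⟩; exact (hmem L).2⟩)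
  rw [Function.iterate_succ_apply']
  exact hle _ (hmem L)

/-- If a continuous self-map of a real interval never increases its argument, its orbits converge
to its unique fixed point. -/
lemma tendsto_iterate_of_map_le {p q c z : ℝ} {f : ℝ → ℝ} (hcont : ContinuousOn f (Icc p q))
    (hmaps : MapsTo f (Icc p q) (Icc p q)) (huniq : ∀ x ∈ Icc p q, f x = x → x = c)
    (hz : z ∈ Icc p q) (hle : ∀ x ∈ Icc p q, f x ≤ x) :
    Tendsto (fun L : ℕ => f^[L] z) atTop (nhds c) := by
  have hmem : ∀ L, f^[L] z ∈ Icc p q := fun L => hmaps.iterate L hz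
  refine tendsto_iterate_of_unique_fixedPoint isClosed_Icc hcont hmaps huniq hz
    (tendsto_atTop_ciInf (antitone_nat_of_succ_le fun L => ?_)
      ⟨p, by rintro _ ⟨L, rfl⟩; exact (hmem L).1⟩)
  rw [Function.iterate_succ_apply']
  exact hle _ (hmem L)

/-- The graph of `x ↦ x ^ n` lies above its tangents on `[0, ∞)`. -/
lemma pow_tangent_le {x y : ℝ} (hx : 0 ≤ x) (hy : 0 ≤ y) (n : ℕ) :
    x ^ n + n * x ^ (n - 1) * (y - x) ≤ y ^ n := by
  induction n with
  | zero => simp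
  | succ k ih =>
    rcases k with _ | k
    · simp
    · simp only [Nat.add_sub_cancel] at ih ⊢
      push_cast at ih ⊢
      have h := mul_le_mul_of_nonneg_right ih hy
      have h2 : 0 ≤ (k + 1 : ℝ) * x ^ k * (y - x) ^ 2 := by positivity
      calc _ = (x ^ (k + 1) + (k + 1) * x ^ k * (y - x)) * y
            - (k + 1 : ℝ) * x ^ k * (y - x) ^ 2 := by ring
        _ ≤ y ^ (k + 1) * y := by linarith
        _ = _ := by ring

/-- Away from the point of contact, the graph of `x ↦ x ^ n` with `2 ≤ n` lies strictly above its
tangents on `[0, ∞)`. -/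
lemma pow_tangent_lt {x y : ℝ} (hx : 0 ≤ x) (hy : 0 ≤ y) (hxy : x ≠ y) {n : ℕ} (hn : 2 ≤ n) :
    x ^ n + n * x ^ (n - 1) * (y - x) < y ^ n := by
  obtain ⟨k, rfl⟩ := Nat.exists_eq_add_of_le' hn
  rcases hx.eq_or_lt with rfl | hx
  · have : 0 < y := lt_of_le_of_ne hy hxy
    simpa using pow_pos this _
  · have h := mul_le_mul_of_nonneg_right (pow_tangent_le hx.le hy (k + 1)) hy
    have hyx : y - x ≠ 0 := sub_ne_zero.2 hxy.symm
    have h2 : 0 < (k + 1 : ℝ) * x ^ k * (y - x) ^ 2 := by positivity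
    simp only [Nat.add_sub_cancel, Nat.reduceSubDiff] at h ⊢
    push_cast at h ⊢
    calc _ = (x ^ (k + 1) + (k + 1) * x ^ k * (y - x)) * y
          - (k + 1 : ℝ) * x ^ k * (y - x) ^ 2 := by ring
      _ < y ^ (k + 1) * y := by linarith
      _ = _ := by ring

/-- If the mean of a nonnegative sequence exceeds its total mass, then the sequence charges some
index that is at least `2`. -/
lemma exists_two_le_pos_of_hasSum_lt {a : ℕ → ℝ} {s C : ℝ} (ha : ∀ i, 0 ≤ a i) (hs : HasSum a s)
    (hC : HasSum (fun i : ℕ => (i : ℝ) * a i) C) (hsC : s < C) : ∃ i, 2 ≤ i ∧ 0 < a i := by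
  by_contra! h
  refine hsC.not_ge (hasSum_le (fun i => ?_) hC hs)
  rcases lt_or_ge i 2 with hi | hi
  · have : (i : ℝ) ≤ 1 := by exact_mod_cast Nat.le_of_lt_succ hi
    exact mul_le_of_le_one_left (ha i) this
  · simp [le_antisymm (h i hi) (ha i)]

/-- A power series dominated by a summable sequence is continuous on `[0, 1]`. -/
lemma continuousOn_Icc_of_hasSum_mul_pow {b : ℕ → ℝ} {g : ℝ → ℝ} {e : ℕ → ℕ} (hb : ∀ i, 0 ≤ b i)
    (hsum : Summable b) (hg : ∀ z ∈ Icc (0 : ℝ) 1, HasSum (fun i => b i * z ^ e i) (g z)) :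
    ContinuousOn g (Icc 0 1) := by
  refine (continuousOn_tsum (f := fun i z => b i * z ^ e i) (fun i => by fun_prop) hsum
    fun i z hz => ?_).congr fun z hz => (hg z hz).tsum_eq.symm
  rw [Real.norm_of_nonneg (mul_nonneg (hb i) (pow_nonneg hz.1 _))]
  exact mul_le_of_le_one_right (hb i) (pow_le_one₀ hz.1 hz.2)

/-- For a dual activation `f(z) = ∑ aᵢ zⁱ` with nonnegative coefficients, `f(0) = a₀ > 0`,
`f(1) = 1`, and `1 < f'(1) = ∑ i·aᵢ < ∞` (the chaotic phase), there is a unique fixed point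
`c ∈ (0,1)` of `f`; it satisfies `f'(c) < 1`; and the iterates `f^[L](z)` converge to `c`
for every `z ∈ [0,1)`. -/
theorem chaotic_phase_unique_attracting_fixed_point
    (a : ℕ → ℝ) (f f' : ℝ → ℝ) (C : ℝ)
    (ha : ∀ i, 0 ≤ a i)
    (hf : ∀ z ∈ Set.Icc (0 : ℝ) 1, HasSum (fun i => a i * z ^ i) (f z))
    (hf' : ∀ z ∈ Set.Icc (0 : ℝ) 1, HasSum (fun i : ℕ => (i : ℝ) * a i * z ^ (i - 1)) (f' z))
    (ha0 : 0 < a 0) (hone : HasSum a 1)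
    (hC : HasSum (fun i : ℕ => (i : ℝ) * a i) C) (hC1 : 1 < C) :
    ∃ c ∈ Set.Ioo (0 : ℝ) 1, f c = c ∧
      (∀ c' ∈ Set.Ioo (0 : ℝ) 1, f c' = c' → c' = c) ∧
      f' c < 1 ∧
      (∀ z ∈ Set.Ico (0 : ℝ) 1, Tendsto (fun L : ℕ => f^[L] z) atTop (nhds c)) := by
  have hcont : ContinuousOn f (Icc 0 1) :=
    continuousOn_Icc_of_hasSum_mul_pow (e := id) ha hone.summable hf
  have hcont' : ContinuousOn f' (Icc 0 1) :=
    continuousOn_Icc_of_hasSum_mul_pow (e := fun i => i - 1)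
      (fun i => mul_nonneg i.cast_nonneg (ha i)) hC.summable hf'
  have h0mem : (0 : ℝ) ∈ Icc (0 : ℝ) 1 := ⟨le_rfl, zero_le_one⟩
  have h1mem : (1 : ℝ) ∈ Icc (0 : ℝ) 1 := ⟨zero_le_one, le_rfl⟩
  have hf1 : f 1 = 1 := (hf 1 h1mem).unique (by simpa using hone)
  have hderiv_one : f' 1 = C := (hf' 1 h1mem).unique (by simpa using hC)
  have hf0 : 0 < f 0 := by
    have := le_hasSum (hf 0 h0mem) 0 fun i _ => mul_nonneg (ha i) (pow_nonneg le_rfl i)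
    simp only [pow_zero, mul_one] at this
    exact ha0.trans_le this
  have hmono : MonotoneOn f (Icc 0 1) := fun x hx y hy hxy =>
    hasSum_le (fun i => mul_le_mul_of_nonneg_left (pow_le_pow_left₀ hx.1 hxy i) (ha i))
      (hf x hx) (hf y hy)
  obtain ⟨m, hm, ham⟩ := exists_two_le_pos_of_hasSum_lt ha hone hC hC1
  have htangent : ∀ x ∈ Icc (0 : ℝ) 1, ∀ y ∈ Icc (0 : ℝ) 1, x ≠ y →
      f x + f' x * (y - x) < f y := by
    intro x hx y hy hxy
    have hterm : ∀ i : ℕ, a i * x ^ i + (i : ℝ) * a i * x ^ (i - 1) * (y - x)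
        = a i * (x ^ i + i * x ^ (i - 1) * (y - x)) := fun i => by ring
    refine hasSum_lt (i := m) (fun i => ?_) ?_ ((hf x hx).add ((hf' x hx).mul_right (y - x)))
      (hf y hy)
    · simp only [hterm]
      exact mul_le_mul_of_nonneg_left (pow_tangent_le hx.1 hy.1 i) (ha i)
    · simp only [hterm]
      exact mul_lt_mul_of_pos_left (pow_tangent_lt hx.1 hy.1 hxy hm) ham
  have hderiv : ∀ x ∈ Ioo (0 : ℝ) 1, f x = x → f' x < 1 := by
    intro x hx hfx
    have := htangent x (Ioo_subset_Icc_self hx) 1 h1mem hx.2.ne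
    rw [hfx, hf1] at this
    nlinarith [hx.2]
  have habove : ∀ c ∈ Ioo (0 : ℝ) 1, f c = c → ∀ x ∈ Ico 0 c, x < f x := by
    intro c hc hfc x hx
    have := htangent c (Ioo_subset_Icc_self hc) x ⟨hx.1, (hx.2.trans hc.2).le⟩ hx.2.ne'
    rw [hfc] at this
    nlinarith [hderiv c hc hfc, hx.2]
  obtain ⟨w, hw, hfw⟩ : ∃ w ∈ Ioo (0 : ℝ) 1, f w < w := by
    have hev : ∀ᶠ x in nhdsWithin 1 (Ioo (0 : ℝ) 1), 1 < f' x :=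
      ((hcont' 1 h1mem).mono Ioo_subset_Icc_self).eventually_const_lt (hderiv_one ▸ hC1)
    have : (nhdsWithin (1 : ℝ) (Ioo 0 1)).NeBot := right_nhdsWithin_Ioo_neBot zero_lt_one
    obtain ⟨w, hw1, hw⟩ := (hev.and self_mem_nhdsWithin).exists
    refine ⟨w, hw, ?_⟩
    have := htangent w (Ioo_subset_Icc_self hw) 1 h1mem hw.2.ne
    rw [hf1] at this
    nlinarith [hw.2]
  obtain ⟨c, hc, hfc⟩ : ∃ c ∈ Ioo (0 : ℝ) 1, f c = c := by
    have hsub : ContinuousOn (fun x => f x - x) (Icc 0 w) :=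
      (hcont.mono (Icc_subset_Icc_right hw.2.le)).sub continuousOn_id
    obtain ⟨c, hc, hfc⟩ := intermediate_value_Ioo' hw.1.le hsub
      (show (0 : ℝ) ∈ Ioo (f w - w) (f 0 - 0) from ⟨sub_neg.2 hfw, by simpa using hf0⟩)
    exact ⟨c, ⟨hc.1, hc.2.trans hw.2⟩, sub_eq_zero.1 hfc⟩
  have huniq : ∀ c' ∈ Ioo (0 : ℝ) 1, f c' = c' → c' = c := by
    intro c' hc' hfc'
    rcases lt_trichotomy c' c with h | h | h
    · exact absurd hfc' (habove c hc hfc c' ⟨hc'.1.le, h⟩).ne'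
    · exact h
    · exact absurd hfc (habove c' hc' hfc' c ⟨hc.1.le, h⟩).ne'
  have hbelow : ∀ x ∈ Ioo c 1, f x < x := by
    intro x hx
    have hx01 : x ∈ Icc (0 : ℝ) 1 := ⟨(hc.1.trans hx.1).le, hx.2.le⟩
    have h1 := htangent x hx01 c (Ioo_subset_Icc_self hc) hx.1.ne'
    have h2 := htangent x hx01 1 h1mem hx.2.ne
    rw [hfc] at h1
    rw [hf1] at h2
    have h3 := mul_lt_mul_of_pos_left h1 (sub_pos.2 hx.2)
    have h4 := mul_lt_mul_of_pos_left h2 (sub_pos.2 hx.1)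
    have h5 : (1 - c) * f x < (1 - c) * x := by linarith
    exact lt_of_mul_lt_mul_left h5 (sub_pos.2 hc.2).le
  refine ⟨c, hc, hfc, huniq, hderiv c hc hfc, fun z hz => ?_⟩
  rcases le_total z c with hzc | hcz
  · have hsub : Icc 0 c ⊆ Icc (0 : ℝ) 1 := Icc_subset_Icc_right hc.2.le
    have hle : ∀ x ∈ Icc 0 c, x ≤ f x := fun x hx =>
      hx.2.eq_or_lt.elim (fun h => by rw [h, hfc]) fun h => (habove c hc hfc x ⟨hx.1, h⟩).le
    refine tendsto_iterate_of_le_map (hcont.mono hsub) (fun x hx => ⟨hx.1.trans (hle x hx), ?_⟩)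
      (fun x hx hfx => ?_) ⟨hz.1, hzc⟩ hle
    · simpa only [hfc] using hmono (hsub hx) (Ioo_subset_Icc_self hc) hx.2
    · by_contra hne
      exact (habove c hc hfc x ⟨hx.1, lt_of_le_of_ne hx.2 hne⟩).ne' hfx
  · have hsub : Icc c z ⊆ Icc (0 : ℝ) 1 := Icc_subset_Icc hc.1.le hz.2.le
    have hle : ∀ x ∈ Icc c z, f x ≤ x := fun x hx =>
      hx.1.eq_or_lt.elim (fun h => by rw [← h, hfc]) fun h =>
        (hbelow x ⟨h, hx.2.trans_lt hz.2⟩).le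
    refine tendsto_iterate_of_map_le (hcont.mono hsub) (fun x hx => ⟨?_, (hle x hx).trans hx.2⟩)
      (fun x hx hfx => huniq x ⟨hc.1.trans_le hx.1, hx.2.trans_lt hz.2⟩ hfx) ⟨hcz, le_rfl⟩ hle
    simpa only [hfc] using hmono (Ioo_subset_Icc_self hc) (hsub hx) hx.1
end

section
/- Let f be given on [0,1] by a convergent power series f(z) = ∑_{i=0}^∞ a_i z^i with a_i ≥ 0 for all i, satisfying a_0 > 0 (f(0) > 0), ∑_i a_i = 1 (f(1) = 1), and 1 < ∑_i i·a_i < ∞ (1 < f'(1) < ∞), and let c ∈ (0,1) be the unique fixed point of f in (0,1) (which exists and satisfies f'(c) < 1). Then for every z ∈ (0,1), lim_{L→∞} K_L(z) = c/(1 - f'(c)), while lim_{L→∞} K_L(1) = ∞. -/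
open Filter Set

/-- A real sequence satisfying an affine recursion `u (n + 1) = b n + u n * r n` whose coefficients
converge to `β` and `ρ ∈ [0, 1)` converges to the fixed point of the limiting recursion. -/
lemma tendsto_of_affine_recursion {u b r : ℕ → ℝ} {β ρ : ℝ} (h0 : 0 ≤ ρ) (h1 : ρ < 1)
    (hu : ∀ n, u (n + 1) = b n + u n * r n)
    (hb : Tendsto b atTop (nhds β)) (hr : Tendsto r atTop (nhds ρ)) :
    Tendsto u atTop (nhds (β / (1 - ρ))) := by
  set k := β / (1 - ρ) with hk
  have hkeq : β + k * ρ - k = 0 := by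
    have : 1 - ρ ≠ 0 := by linarith
    rw [hk]; field_simp; ring
  obtain ⟨q, hρq, hq1⟩ := exists_between h1
  have hq0 : 0 < q := h0.trans_lt hρq
  have herr : Tendsto (fun n => |b n + k * r n - k|) atTop (nhds 0) := by
    have := (((hb.add (hr.const_mul k)).sub_const k)).abs
    rwa [hkeq, abs_zero] at this
  have hrq : ∀ᶠ n in atTop, |r n| ≤ q := by
    have := hr.abs
    rw [abs_of_nonneg h0] at this
    exact (this.eventually_lt_const hρq).mono fun n hn => hn.le
  rw [Metric.tendsto_atTop]
  intro ε hε
  have hδ : 0 < (1 - q) * (ε / 2) := by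
    have : 0 < 1 - q := by linarith
    positivity
  obtain ⟨N, hN⟩ := eventually_atTop.1 (hrq.and (herr.eventually_lt_const hδ))
  have hbound : ∀ m, |u (N + m) - k| ≤ q ^ m * |u N - k| + ε / 2 := by
    intro m
    induction m with
    | zero => simp; linarith
    | succ m ih =>
      obtain ⟨hr1, he1⟩ := hN (N + m) (by omega)
      have hstep : u (N + (m + 1)) - k
          = (b (N + m) + k * r (N + m) - k) + (u (N + m) - k) * r (N + m) := by
        rw [← add_assoc, hu]; ring
      have hmul : |u (N + m) - k| * |r (N + m)| ≤ (q ^ m * |u N - k| + ε / 2) * q :=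
        mul_le_mul ih hr1 (abs_nonneg _) (by positivity)
      calc |u (N + (m + 1)) - k|
          ≤ |b (N + m) + k * r (N + m) - k| + |u (N + m) - k| * |r (N + m)| := by
            rw [hstep, ← abs_mul]; exact abs_add_le _ _
        _ ≤ (1 - q) * (ε / 2) + (q ^ m * |u N - k| + ε / 2) * q := add_le_add he1.le hmul
        _ = q ^ (m + 1) * |u N - k| + ε / 2 := by ring
  have hgeo : Tendsto (fun m : ℕ => q ^ m * |u N - k|) atTop (nhds 0) := by
    simpa using (tendsto_pow_atTop_nhds_zero_of_lt_one hq0.le hq1).mul_const |u N - k|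
  obtain ⟨M, hM⟩ := eventually_atTop.1 (hgeo.eventually_lt_const (half_pos hε))
  refine ⟨N + M, fun n hn => ?_⟩
  obtain ⟨m, rfl⟩ := Nat.exists_eq_add_of_le ((Nat.le_add_right N M).trans hn)
  have h2 := hM m (by omega)
  rw [Real.dist_eq]
  linarith [hbound m]

/-- Iterates of a map that contracts towards `c` on an invariant set converge to `c`. -/
lemma tendsto_iterate_of_contracting_toward {f : ℝ → ℝ} {s : Set ℝ} {c ρ : ℝ} (h0 : 0 ≤ ρ)
    (h1 : ρ < 1) (hs : MapsTo f s s) (hρ : ∀ y ∈ s, |f y - c| ≤ ρ * |y - c|) {z : ℝ}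
    (hz : z ∈ s) : Tendsto (fun L : ℕ => f^[L] z) atTop (nhds c) := by
  have hbound : ∀ L : ℕ, |f^[L] z - c| ≤ ρ ^ L * |z - c| := by
    intro L
    induction L with
    | zero => simp
    | succ L ih =>
      rw [Function.iterate_succ_apply', pow_succ']
      calc |f (f^[L] z) - c| ≤ ρ * |f^[L] z - c| := hρ _ (hs.iterate L hz)
        _ ≤ ρ * (ρ ^ L * |z - c|) := by gcongr
        _ = ρ * ρ ^ L * |z - c| := by ring
  rw [tendsto_iff_dist_tendsto_zero]
  refine squeeze_zero (fun _ => dist_nonneg) hbound ?_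
  simpa using (tendsto_pow_atTop_nhds_zero_of_lt_one h0 h1).mul_const |z - c|

/-- The tangent line inequality for monomials. -/
lemma tangent_le_pow_sub_pow {z w : ℝ} (hz : 0 ≤ z) (hw : 0 ≤ w) (i : ℕ) :
    (i : ℝ) * w ^ (i - 1) * (z - w) ≤ z ^ i - w ^ i := by
  induction i with
  | zero => simp
  | succ i ih =>
    rcases i with _ | i
    · simp
    · simp only [Nat.add_sub_cancel] at ih ⊢
      have hkey : 0 ≤ (z - w) * (z ^ (i + 1) - w ^ (i + 1)) := by
        rcases le_total z w with h | h
        · exact mul_nonneg_of_nonpos_of_nonpos (sub_nonpos.2 h)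
            (sub_nonpos.2 (pow_le_pow_left₀ hz h _))
        · exact mul_nonneg (sub_nonneg.2 h) (sub_nonneg.2 (pow_le_pow_left₀ hw h _))
      have h3 := mul_le_mul_of_nonneg_left ih hw
      push_cast at h3 ⊢
      have e1 : z ^ (i + 1 + 1) = z * z ^ (i + 1) := pow_succ' _ _
      have e2 : w ^ (i + 1 + 1) = w * w ^ (i + 1) := pow_succ' _ _
      have e3 : w ^ (i + 1) = w * w ^ i := pow_succ' _ _
      rw [e1, e2]
      rw [e3] at h3 hkey ⊢
      nlinarith [h3, hkey]

section PowerSeries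

variable {a : ℕ → ℝ} {f f' : ℝ → ℝ}

/-- A power series with nonnegative coefficients is strictly convex on `[0, 1]` as soon as some
coefficient of degree at least two is positive. -/
lemma strictConvexOn_of_hasSum_pow (ha : ∀ i, 0 ≤ a i)
    (hf : ∀ z ∈ Icc (0 : ℝ) 1, HasSum (fun i => a i * z ^ i) (f z))
    {j : ℕ} (hj : 2 ≤ j) (haj : 0 < a j) : StrictConvexOn ℝ (Icc (0 : ℝ) 1) f := by
  refine ⟨convex_Icc 0 1, fun x hx y hy hxy s t hs ht hst => ?_⟩
  have hmem : s • x + t • y ∈ Icc (0 : ℝ) 1 := convex_Icc 0 1 hx hy hs.le ht.le hst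
  have hrhs : HasSum (fun i => s * (a i * x ^ i) + t * (a i * y ^ i)) (s • f x + t • f y) :=
    ((hf x hx).mul_left s).add ((hf y hy).mul_left t)
  refine hasSum_lt (i := j) (fun i => ?_) ?_ (hf _ hmem) hrhs
  · have h := (convexOn_pow i).2 (mem_Ici.2 hx.1) (mem_Ici.2 hy.1) hs.le ht.le hst
    simp only [smul_eq_mul] at h ⊢
    linarith [mul_le_mul_of_nonneg_left h (ha i)]
  · have h := (strictConvexOn_pow hj).2 (mem_Ici.2 hx.1) (mem_Ici.2 hy.1) hxy hs ht hst
    simp only [smul_eq_mul] at h ⊢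
    linarith [mul_lt_mul_of_pos_left h haj]

lemma monotoneOn_of_hasSum_pow (ha : ∀ i, 0 ≤ a i)
    (hf : ∀ z ∈ Icc (0 : ℝ) 1, HasSum (fun i => a i * z ^ i) (f z)) :
    MonotoneOn f (Icc (0 : ℝ) 1) := fun x hx y hy hxy =>
  hasSum_le (fun i => mul_le_mul_of_nonneg_left (pow_le_pow_left₀ hx.1 hxy i) (ha i))
    (hf x hx) (hf y hy)

lemma tangent_le_of_hasSum_pow (ha : ∀ i, 0 ≤ a i)
    (hf : ∀ z ∈ Icc (0 : ℝ) 1, HasSum (fun i => a i * z ^ i) (f z))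
    (hf' : ∀ z ∈ Icc (0 : ℝ) 1, HasSum (fun i : ℕ => (i : ℝ) * a i * z ^ (i - 1)) (f' z))
    {z w : ℝ} (hz : z ∈ Icc (0 : ℝ) 1) (hw : w ∈ Icc (0 : ℝ) 1) :
    f' w * (z - w) ≤ f z - f w := by
  refine hasSum_le (fun i => ?_) ((hf' w hw).mul_right (z - w)) ((hf z hz).sub (hf w hw))
  have := mul_le_mul_of_nonneg_left (tangent_le_pow_sub_pow hz.1 hw.1 i) (ha i)
  linarith

lemma continuousOn_of_hasSum_deriv_pow (ha : ∀ i, 0 ≤ a i)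
    (hf' : ∀ z ∈ Icc (0 : ℝ) 1, HasSum (fun i : ℕ => (i : ℝ) * a i * z ^ (i - 1)) (f' z))
    (hsum : Summable fun i : ℕ => (i : ℝ) * a i) : ContinuousOn f' (Icc (0 : ℝ) 1) := by
  have hcont : ContinuousOn (fun z : ℝ => ∑' i : ℕ, (i : ℝ) * a i * z ^ (i - 1))
      (Icc (0 : ℝ) 1) := by
    refine continuousOn_tsum (fun i => by fun_prop) hsum fun i z hz => ?_
    have hi : 0 ≤ (i : ℝ) * a i := mul_nonneg i.cast_nonneg (ha i)
    rw [Real.norm_of_nonneg (mul_nonneg hi (pow_nonneg hz.1 _))]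
    exact mul_le_of_le_one_right hi (pow_le_one₀ hz.1 hz.2)
  exact hcont.congr fun z hz => (hf' z hz).tsum_eq.symm

end PowerSeries

/-- A probability distribution on `ℕ` with mean greater than one charges some `j ≥ 2`. -/
lemma exists_two_le_pos_of_one_lt_mean {a : ℕ → ℝ} {C : ℝ} (ha : ∀ i, 0 ≤ a i)
    (hone : HasSum a 1) (hC : HasSum (fun i : ℕ => (i : ℝ) * a i) C) (hC1 : 1 < C) :
    ∃ j, 2 ≤ j ∧ 0 < a j := by
  by_contra! h
  refine hC1.not_ge (hasSum_le (fun i => ?_) hC hone)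
  rcases lt_or_ge i 2 with hi | hi
  · have : (i : ℝ) ≤ 1 := by exact_mod_cast Nat.lt_succ_iff.1 hi
    exact mul_le_of_le_one_left (ha i) this
  · simp [le_antisymm (h i hi) (ha i)]

/-- A monotone convex function with a fixed point `c` contracts towards `c` on `[0, w]`, at the rate
given by the slope between `c` and `w`. -/
lemma abs_sub_le_slope_mul_of_convexOn {f : ℝ → ℝ} {c w y : ℝ} (hconv : ConvexOn ℝ (Icc 0 1) f)
    (hmono : MonotoneOn f (Icc 0 1)) (hc : c ∈ Ioo (0 : ℝ) 1) (hfc : f c = c)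
    (hcw : c < w) (hw : w ≤ 1) (hy : y ∈ Icc 0 w) :
    |f y - c| ≤ (f w - c) / (w - c) * |y - c| := by
  have hwI : w ∈ Icc (0 : ℝ) 1 := ⟨(hc.1.trans hcw).le, hw⟩
  have hcI : c ∈ Icc (0 : ℝ) 1 := ⟨hc.1.le, hc.2.le⟩
  have hyI : y ∈ Icc (0 : ℝ) 1 := ⟨hy.1, hy.2.trans hw⟩
  rcases lt_trichotomy y c with h | rfl | h
  · have hs := hconv.slope_mono_adjacent hyI hwI h hcw
    have hle := hmono hyI hcI h.le
    rw [hfc] at hs hle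
    rw [abs_of_nonpos (by linarith), abs_of_neg (by linarith), neg_sub, neg_sub]
    exact (div_le_iff₀ (sub_pos.2 h)).1 hs
  · simp [hfc]
  · have hs := hconv.secant_mono hcI hyI hwI h.ne' hcw.ne' hy.2
    have hle := hmono hcI hyI h.le
    rw [hfc] at hs hle
    rw [abs_of_nonneg (by linarith), abs_of_pos (by linarith)]
    exact (div_le_iff₀ (sub_pos.2 h)).1 hs

/-- Chaotic phase NTK limits (from Lemma 7 of the paper): for a dual activation
`f(z) = ∑ aᵢ zⁱ` with nonnegative coefficients, `f(0) > 0`, `f(1) = 1`,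
`1 < f'(1) = ∑ i·aᵢ < ∞`, and `c ∈ (0,1)` the fixed point of `f`, the depth-`L` NTK
satisfies `K_L(z) → c/(1 - f'(c))` for all `z ∈ (0,1)`, while `K_L(1) → ∞`. -/
theorem chaotic_phase_NTK_limits
    (a : ℕ → ℝ) (f f' : ℝ → ℝ) (K : ℕ → ℝ → ℝ) (C : ℝ)
    (ha : ∀ i, 0 ≤ a i)
    (hf : ∀ z ∈ Set.Icc (0 : ℝ) 1, HasSum (fun i => a i * z ^ i) (f z))
    (hf' : ∀ z ∈ Set.Icc (0 : ℝ) 1, HasSum (fun i : ℕ => (i : ℝ) * a i * z ^ (i - 1)) (f' z))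
    (ha0 : 0 < a 0) (hone : HasSum a 1)
    (hC : HasSum (fun i : ℕ => (i : ℝ) * a i) C) (hC1 : 1 < C)
    (hK0 : ∀ z, K 0 z = z)
    (hKrec : ∀ L z, K (L + 1) z = f^[L + 1] z + K L z * f' (f^[L] z))
    (c : ℝ) (hc : c ∈ Set.Ioo (0 : ℝ) 1) (hfc : f c = c) :
    (∀ z ∈ Set.Ioo (0 : ℝ) 1,
      Tendsto (fun L : ℕ => K L z) atTop (nhds (c / (1 - f' c)))) ∧
    Tendsto (fun L : ℕ => K L 1) atTop atTop := by
  have hcI : c ∈ Icc (0 : ℝ) 1 := ⟨hc.1.le, hc.2.le⟩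
  have h1I : (1 : ℝ) ∈ Icc (0 : ℝ) 1 := ⟨zero_le_one, le_rfl⟩
  have hf1 : f 1 = 1 := (hf 1 h1I).unique (by simpa using hone)
  have hf'1 : f' 1 = C := (hf' 1 h1I).unique (by simpa using hC)
  refine ⟨fun z hz => ?_, ?_⟩
  · obtain ⟨j, hj, haj⟩ := exists_two_le_pos_of_one_lt_mean ha hone hC hC1
    have hconv := strictConvexOn_of_hasSum_pow ha hf hj haj
    have hmono := monotoneOn_of_hasSum_pow ha hf
    obtain ⟨w, hmw, hw1⟩ := exists_between (max_lt hz.2 hc.2)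
    obtain ⟨hzw, hcw⟩ := max_lt_iff.1 hmw
    have hwI : w ∈ Icc (0 : ℝ) 1 := ⟨(hc.1.trans hcw).le, hw1.le⟩
    have hwc : 0 < w - c := sub_pos.2 hcw
    have hfw : f w < w := by
      have h := hconv.secant_strict_mono hcI hwI h1I hcw.ne' hc.2.ne' hw1
      rw [hf1, hfc, div_self (sub_pos.2 hc.2).ne', div_lt_one hwc] at h
      linarith
    have hcfw : c ≤ f w := hfc ▸ hmono hcI hwI hcw.le
    have hmaps : MapsTo f (Icc 0 w) (Icc 0 w) := fun y hy => by
      have hyI : y ∈ Icc (0 : ℝ) 1 := ⟨hy.1, hy.2.trans hw1.le⟩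
      exact ⟨(hf y hyI).nonneg fun i => mul_nonneg (ha i) (pow_nonneg hy.1 i),
        (hmono hyI hwI hy.2).trans hfw.le⟩
    have hzw' : z ∈ Icc 0 w := ⟨hz.1.le, hzw.le⟩
    have hiter : Tendsto (fun L : ℕ => f^[L] z) atTop (nhds c) :=
      tendsto_iterate_of_contracting_toward (div_nonneg (sub_nonneg.2 hcfw) hwc.le)
        ((div_lt_one hwc).2 (by linarith)) hmaps
        (fun y hy => abs_sub_le_slope_mul_of_convexOn hconv.convexOn hmono hc hfc hcw hw1.le hy)
        hzw'
    have hd0 : 0 ≤ f' c := (hf' c hcI).nonneg fun i =>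
      mul_nonneg (mul_nonneg i.cast_nonneg (ha i)) (pow_nonneg hcI.1 _)
    have hd1 : f' c < 1 := by
      have h := tangent_le_of_hasSum_pow ha hf hf' hwI hcI
      rw [hfc] at h
      exact lt_of_mul_lt_mul_right (by linarith) hwc.le
    have hcont : ContinuousAt f' c :=
      (continuousOn_of_hasSum_deriv_pow ha hf' hC.summable).continuousAt (Icc_mem_nhds hc.1 hc.2)
    exact tendsto_of_affine_recursion hd0 hd1 (fun L => hKrec L z)
      (hiter.comp (tendsto_add_atTop_nat 1)) (hcont.tendsto.comp hiter)
  · have hlin : ∀ L : ℕ, (L : ℝ) ≤ K L 1 := by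
      intro L
      induction L with
      | zero => simp [hK0]
      | succ L ih =>
        rw [hKrec, Function.iterate_fixed hf1, Function.iterate_fixed hf1, hf'1]
        have hK : 0 ≤ K L 1 := L.cast_nonneg.trans ih
        push_cast
        linarith [le_mul_of_one_le_right hK hC1.le]
    exact tendsto_atTop_mono hlin tendsto_natCast_atTop_atTop
end

section
/- Let f be given on [0,1] by a convergent power series f(z) = ∑_{i=0}^∞ a_i z^i with a_i ≥ 0 for all i, satisfying a_0 > 0 (f(0) > 0), ∑_i a_i = 1 (f(1) = 1), and ∑_i i·a_i < 1 (f'(1) < 1). Then for every z ∈ [0,1], lim_{L→∞} K_L(z) = 1/(1 - f'(1)). -/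
open Filter Set

/-- A nonnegative sequence that contracts up to a vanishing perturbation tends to zero. -/
theorem tendsto_zero_of_le_mul_add {v d : ℕ → ℝ} {c : ℝ} (hc0 : 0 ≤ c) (hc1 : c < 1)
    (hv : ∀ n, 0 ≤ v n) (hrec : ∀ n, v (n + 1) ≤ c * v n + d n)
    (hd : Tendsto d atTop (nhds 0)) : Tendsto v atTop (nhds 0) := by
  rw [Metric.tendsto_atTop]
  intro ε hε
  have hc : 0 < 1 - c := by linarith
  obtain ⟨N, hN⟩ := eventually_atTop.1
    (hd.eventually (gt_mem_nhds (show 0 < ε / 2 * (1 - c) by positivity)))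
  have bound : ∀ k, v (N + k) ≤ c ^ k * v N + ε / 2 := by
    intro k
    induction k with
    | zero => simp only [add_zero, pow_zero, one_mul]; linarith
    | succ k ih =>
      calc v (N + (k + 1)) ≤ c * v (N + k) + d (N + k) := hrec (N + k)
        _ ≤ c * (c ^ k * v N + ε / 2) + ε / 2 * (1 - c) :=
          add_le_add (mul_le_mul_of_nonneg_left ih hc0) (hN _ (Nat.le_add_right N k)).le
        _ = c ^ (k + 1) * v N + ε / 2 := by ring
  have hpow : Tendsto (fun k : ℕ => c ^ k * v N) atTop (nhds 0) := by
    simpa using (tendsto_pow_atTop_nhds_zero_of_lt_one hc0 hc1).mul_const (v N)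
  obtain ⟨M, hM⟩ := eventually_atTop.1 (hpow.eventually (gt_mem_nhds (half_pos hε)))
  refine ⟨N + M, fun n hn => ?_⟩
  obtain ⟨k, rfl⟩ := Nat.exists_eq_add_of_le (show N ≤ n by omega)
  have hk := hM k (by omega)
  rw [Real.dist_eq, sub_zero, abs_of_nonneg (hv _)]
  linarith [bound k]

/-- The solution of an affine recursion with convergent coefficients tends to the fixed point of
the limiting recursion. -/
theorem tendsto_affine_recursion {u b m : ℕ → ℝ} {β c : ℝ} (hc1 : c < 1)
    (hm0 : ∀ n, 0 ≤ m n) (hmc : ∀ n, m n ≤ c) (hrec : ∀ n, u (n + 1) = b n + u n * m n)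
    (hb : Tendsto b atTop (nhds β)) (hm : Tendsto m atTop (nhds c)) :
    Tendsto u atTop (nhds (β / (1 - c))) := by
  set l := β / (1 - c) with hl
  have hfix : β + l * c - l = 0 := by
    have : 1 - c ≠ 0 := by linarith
    rw [hl]; field_simp; ring
  have hd : Tendsto (fun n => |b n + l * m n - l|) atTop (nhds 0) := by
    simpa [hfix] using ((hb.add (hm.const_mul l)).sub_const l).abs
  have hu : Tendsto (fun n => |u n - l|) atTop (nhds 0) := by
    refine tendsto_zero_of_le_mul_add ((hm0 0).trans (hmc 0)) hc1 (fun n => abs_nonneg _)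
      (fun n => ?_) hd
    calc |u (n + 1) - l| = |m n * (u n - l) + (b n + l * m n - l)| := by
          rw [hrec]; congr 1; ring
      _ ≤ |m n * (u n - l)| + |b n + l * m n - l| := abs_add_le _ _
      _ ≤ c * |u n - l| + |b n + l * m n - l| := by
          rw [abs_mul, abs_of_nonneg (hm0 n)]
          gcongr
          exact hmc n
  exact tendsto_iff_norm_sub_tendsto_zero.2 hu

/-- Ordered phase NTK limit (from Lemma 8 of the paper): for a dual activation
`f(z) = ∑ aᵢ zⁱ` with nonnegative coefficients, `f(0) > 0`, `f(1) = 1`, and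
`f'(1) = ∑ i·aᵢ < 1`, the depth-`L` NTK satisfies `K_L(z) → 1/(1 - f'(1))`
for every `z ∈ [0,1]`. -/
theorem ordered_phase_NTK_limit
    (a : ℕ → ℝ) (f f' : ℝ → ℝ) (K : ℕ → ℝ → ℝ) (C : ℝ)
    (ha : ∀ i, 0 ≤ a i)
    (hf : ∀ z ∈ Set.Icc (0 : ℝ) 1, HasSum (fun i => a i * z ^ i) (f z))
    (hf' : ∀ z ∈ Set.Icc (0 : ℝ) 1, HasSum (fun i : ℕ => (i : ℝ) * a i * z ^ (i - 1)) (f' z))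
    (ha0 : 0 < a 0) (hone : HasSum a 1)
    (hC : HasSum (fun i : ℕ => (i : ℝ) * a i) C) (hC1 : C < 1)
    (hK0 : ∀ z, K 0 z = z)
    (hKrec : ∀ L z, K (L + 1) z = f^[L + 1] z + K L z * f' (f^[L] z)) :
    ∀ z ∈ Set.Icc (0 : ℝ) 1,
      Tendsto (fun L : ℕ => K L z) atTop (nhds (1 / (1 - C))) := by
  intro z hz
  have hfmem : ∀ x ∈ Icc (0 : ℝ) 1, f x ∈ Icc (0 : ℝ) 1 := fun x hx =>
    ⟨(hf x hx).nonneg fun i => mul_nonneg (ha i) (pow_nonneg hx.1 i),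
      hasSum_le (fun i => mul_le_of_le_one_right (ha i) (pow_le_one₀ hx.1 hx.2)) (hf x hx) hone⟩
  have hcontr : ∀ x ∈ Icc (0 : ℝ) 1, 1 - f x ≤ C * (1 - x) := by
    intro x hx
    refine hasSum_le (fun i => ?_) (hone.sub (hf x hx)) (hC.mul_right (1 - x))
    have hbern := one_add_mul_le_pow (show (-2 : ℝ) ≤ x - 1 by linarith [hx.1]) i
    rw [add_sub_cancel] at hbern
    nlinarith [ha i]
  have hterm : ∀ x ∈ Icc (0 : ℝ) 1, ∀ i : ℕ,
      0 ≤ (i : ℝ) * a i * x ^ (i - 1) ∧ (i : ℝ) * a i * x ^ (i - 1) ≤ i * a i := fun x hx i =>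
    have hi : 0 ≤ (i : ℝ) * a i := mul_nonneg i.cast_nonneg (ha i)
    ⟨mul_nonneg hi (pow_nonneg hx.1 _), mul_le_of_le_one_right hi (pow_le_one₀ hx.1 hx.2)⟩
  have hC0 : 0 ≤ C := hC.nonneg fun i => mul_nonneg i.cast_nonneg (ha i)
  have hmem : ∀ L, f^[L] z ∈ Icc (0 : ℝ) 1 := by
    intro L
    induction L with
    | zero => exact hz
    | succ L ih => rw [Function.iterate_succ_apply']; exact hfmem _ ih
  have hx : Tendsto (fun L => f^[L] z) atTop (nhds 1) := by
    have h0 : Tendsto (fun L => 1 - f^[L] z) atTop (nhds 0) := by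
      refine tendsto_zero_of_le_mul_add (d := fun _ => 0) hC0 hC1
        (fun L => sub_nonneg.2 (hmem L).2) (fun L => ?_) tendsto_const_nhds
      rw [Function.iterate_succ_apply', add_zero]
      exact hcontr _ (hmem L)
    simpa using h0.const_sub 1
  have hm : Tendsto (fun L => f' (f^[L] z)) atTop (nhds C) := by
    have h := tendsto_tsum_of_dominated_convergence (𝓕 := atTop)
      (f := fun (L i : ℕ) => (i : ℝ) * a i * (f^[L] z) ^ (i - 1))
      (g := fun i : ℕ => (i : ℝ) * a i) hC.summable
      (fun i => by simpa using (hx.pow (i - 1)).const_mul ((i : ℝ) * a i))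
      (Eventually.of_forall fun L i => by
        rw [Real.norm_of_nonneg (hterm _ (hmem L) i).1]
        exact (hterm _ (hmem L) i).2)
    rw [hC.tsum_eq] at h
    exact h.congr fun L => (hf' _ (hmem L)).tsum_eq
  exact tendsto_affine_recursion hC1
    (fun L => (hf' _ (hmem L)).nonneg fun i => (hterm _ (hmem L) i).1)
    (fun L => hasSum_le (fun i => (hterm _ (hmem L) i).2) (hf' _ (hmem L)) hC)
    (fun L => hKrec L z) (hx.comp (tendsto_add_atTop_nat 1)) hm
end

section
/- Let d ≥ 2 be an integer and define φ : ℝ → ℝ by φ(x) = 2^{-d/4}·(x³ - 3x)/√6 + √(1 - 2·2^{-d/2})·(x² - 1)/√2 + 2^{-d/4}·x. Then for every z ∈ [-1,1], with u and w independent standard Gaussian random variables (mean 0, variance 1), E[φ(u)·φ(z·u + √(1-z²)·w)] = 2^{-d/2}·z³ + (1 - 2·2^{-d/2})·z² + 2^{-d/2}·z. In particular, the dual activation f(z) of φ satisfies f(0) = 0, f(1) = 1, f'(0) = 2^{-d/2}, f'(1) = 2, and -log f'(0)/log f'(1) = d/2. -/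
open MeasureTheory ProbabilityTheory Set

/-- All monomials are integrable against a real Gaussian measure. -/
lemma integrable_pow_gaussianReal (μ : ℝ) (v : NNReal) (n : ℕ) :
    Integrable (fun x : ℝ ↦ x ^ n) (gaussianReal μ v) := by
  have h := (memLp_id_gaussianReal (μ := μ) (v := v) (n : NNReal)).integrable_norm_pow'
  refine h.mono (by fun_prop) (Filter.Eventually.of_forall fun x ↦ ?_)
  simp

/-- All polynomials are integrable against a real Gaussian measure. -/
lemma integrable_polynomial_eval_gaussianReal (μ : ℝ) (v : NNReal) (p : Polynomial ℝ) :
    Integrable (fun x : ℝ ↦ p.eval x) (gaussianReal μ v) := by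
  simp_rw [Polynomial.eval_eq_sum_range]
  exact integrable_finsetSum _ fun i _ ↦ (integrable_pow_gaussianReal μ v i).const_mul _

lemma hasDerivAt_gaussianPDFReal_zero_one (x : ℝ) :
    HasDerivAt (gaussianPDFReal 0 1) (-x * gaussianPDFReal 0 1 x) x := by
  have h : HasDerivAt (fun y : ℝ ↦ -(y - 0) ^ 2 / (2 * ((1 : NNReal) : ℝ))) (-x) x := by
    have := (((hasDerivAt_id x).sub_const 0).pow 2).neg.div_const (2 * ((1 : NNReal) : ℝ))
    convert! this using 1
    simp
    ring
  convert! h.exp.const_mul (√(2 * Real.pi * ((1 : NNReal) : ℝ)))⁻¹ using 1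
  rw [gaussianPDFReal]
  ring

lemma integrable_pow_mul_gaussianPDFReal (n : ℕ) :
    Integrable (fun x : ℝ ↦ x ^ n * gaussianPDFReal 0 1 x) := by
  have h := integrable_pow_gaussianReal 0 1 n
  rw [gaussianReal_of_var_ne_zero 0 one_ne_zero,
    integrable_withDensity_iff (measurable_gaussianPDF 0 1)
      (Filter.Eventually.of_forall fun _ ↦ gaussianPDF_lt_top)] at h
  simpa only [toReal_gaussianPDF] using h

/-- The recurrence between the moments of the standard Gaussian measure. -/
lemma integral_pow_add_two_gaussianReal (n : ℕ) :
    ∫ x, x ^ (n + 2) ∂gaussianReal 0 1 = (n + 1) * ∫ x, x ^ n ∂gaussianReal 0 1 := by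
  have h := integral_mul_deriv_eq_deriv_mul_of_integrable
    (u := fun x : ℝ ↦ x ^ (n + 1)) (v := gaussianPDFReal 0 1)
    (u' := fun x ↦ ((n + 1 : ℕ) : ℝ) * x ^ n) (v' := fun x ↦ -x * gaussianPDFReal 0 1 x)
    (fun x _ ↦ by simpa using hasDerivAt_pow (n + 1) x)
    (fun x _ ↦ hasDerivAt_gaussianPDFReal_zero_one x)
    ((integrable_pow_mul_gaussianPDFReal (n + 2)).neg.congr
      (Filter.Eventually.of_forall fun x ↦ by simp only [Pi.neg_apply, Pi.mul_apply]; ring))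
    (((integrable_pow_mul_gaussianPDFReal n).const_mul ((n + 1 : ℕ) : ℝ)).congr
      (Filter.Eventually.of_forall fun x ↦ by simp only [Pi.mul_apply]; ring))
    (integrable_pow_mul_gaussianPDFReal (n + 1))
  simp_rw [integral_gaussianReal_eq_integral_smul one_ne_zero, smul_eq_mul]
  rw [← integral_const_mul, ← neg_inj, ← integral_neg]
  calc _ = ∫ x : ℝ, x ^ (n + 1) * (-x * gaussianPDFReal 0 1 x) := by congr 1; ext x; ring
    _ = _ := by rw [h]; congr 2; ext x; push_cast; ring

/-- The integral of a polynomial of degree at most six against the standard Gaussian measure. -/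
lemma integral_sextic_gaussianReal (a₀ a₁ a₂ a₃ a₄ a₅ a₆ : ℝ) :
    ∫ x, (a₀ + a₁ * x + a₂ * x ^ 2 + a₃ * x ^ 3 + a₄ * x ^ 4 + a₅ * x ^ 5 + a₆ * x ^ 6)
      ∂gaussianReal 0 1 = a₀ + a₂ + 3 * a₄ + 15 * a₆ := by
  have m₀ : ∫ x : ℝ, x ^ 0 ∂gaussianReal 0 1 = 1 := by simp
  have m₁ : ∫ x : ℝ, x ^ 1 ∂gaussianReal 0 1 = 0 := by simp [integral_id_gaussianReal]
  have m₂ := integral_pow_add_two_gaussianReal 0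
  have m₃ := integral_pow_add_two_gaussianReal 1
  have m₄ := integral_pow_add_two_gaussianReal 2
  have m₅ := integral_pow_add_two_gaussianReal 3
  have m₆ := integral_pow_add_two_gaussianReal 4
  norm_num only [Nat.reduceAdd, zero_add, m₀, m₁] at m₂ m₃
  norm_num only [Nat.reduceAdd, m₂, m₃] at m₄ m₅
  norm_num only [Nat.reduceAdd, m₄] at m₆
  have key (c : Fin 7 → ℝ) : ∫ x, ∑ i, c i * x ^ (i : ℕ) ∂gaussianReal 0 1 =
      ∑ i, c i * ∫ x, x ^ (i : ℕ) ∂gaussianReal 0 1 := by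
    rw [integral_finsetSum _ fun (i : Fin 7) _ ↦
      (integrable_pow_gaussianReal 0 1 (i : ℕ)).const_mul (c i)]
    simp_rw [integral_const_mul]
  have h := key ![a₀, a₁, a₂, a₃, a₄, a₅, a₆]
  simp only [Fin.sum_univ_succ, Fin.sum_univ_zero] at h
  simp [m₂, m₃, m₄, m₅, m₆, integral_id_gaussianReal] at h
  convert! h using 1
  · congr 1; ext x; ring
  · ring

/-- A product `P(u) Q(z u + s w)` with `Q` a polynomial of degree at most three is integrable. -/
lemma integrable_polynomial_mul_cubic (P : Polynomial ℝ) (c₀ c₁ c₂ c₃ z s : ℝ) :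
    Integrable (fun p : ℝ × ℝ ↦ P.eval p.1 * (c₀ + c₁ * (z * p.1 + s * p.2) +
      c₂ * (z * p.1 + s * p.2) ^ 2 + c₃ * (z * p.1 + s * p.2) ^ 3))
      ((gaussianReal 0 1).prod (gaussianReal 0 1)) := by
  have term (Q : Polynomial ℝ) (n : ℕ) := (integrable_polynomial_eval_gaussianReal 0 1 Q).mul_prod
    (integrable_pow_gaussianReal 0 1 n)
  open Polynomial in
  refine ((((term (P * (C c₀ + C (c₁ * z) * X + C (c₂ * z ^ 2) * X ^ 2 +
    C (c₃ * z ^ 3) * X ^ 3)) 0).add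
    (term (P * (C (c₁ * s) + C (2 * c₂ * z * s) * X + C (3 * c₃ * z ^ 2 * s) * X ^ 2)) 1)).add
    (term (P * (C (c₂ * s ^ 2) + C (3 * c₃ * z * s ^ 2) * X)) 2)).add
    (term (P * C (c₃ * s ^ 3)) 3)).congr (Filter.Eventually.of_forall fun p ↦ ?_)
  simp only [Pi.add_apply, Polynomial.eval_mul, Polynomial.eval_add, Polynomial.eval_C,
    Polynomial.eval_pow, Polynomial.eval_X]
  ring

/-- The dual activation of a combination of the Hermite polynomials of degrees one, two, three. -/
lemma integral_hermite_combination_mul (a b c z : ℝ) (hz : z ∈ Set.Icc (-1 : ℝ) 1) (φ : ℝ → ℝ)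
    (hφ : ∀ x, φ x = a * (x ^ 3 - 3 * x) + b * (x ^ 2 - 1) + c * x) :
    ∫ p : ℝ × ℝ, φ p.1 * φ (z * p.1 + √(1 - z ^ 2) * p.2)
      ∂((gaussianReal 0 1).prod (gaussianReal 0 1)) =
      6 * a ^ 2 * z ^ 3 + 2 * b ^ 2 * z ^ 2 + c ^ 2 * z := by
  have hs : √(1 - z ^ 2) ^ 2 = 1 - z ^ 2 := Real.sq_sqrt (by nlinarith [hz.1, hz.2])
  set s := √(1 - z ^ 2)
  have hint : Integrable (fun p : ℝ × ℝ ↦ φ p.1 * φ (z * p.1 + s * p.2))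
      ((gaussianReal 0 1).prod (gaussianReal 0 1)) := by
    open Polynomial in
    refine (integrable_polynomial_mul_cubic (C a * (X ^ 3 - 3 * X) + C b * (X ^ 2 - 1) + C c * X)
      (-b) (c - 3 * a) b a z s).congr (Filter.Eventually.of_forall fun p ↦ ?_)
    simp only [hφ, Polynomial.eval_mul, Polynomial.eval_add, Polynomial.eval_sub,
      Polynomial.eval_C, Polynomial.eval_pow, Polynomial.eval_X, Polynomial.eval_one,
      Polynomial.eval_ofNat]
    ring
  have inner (u : ℝ) : ∫ w, φ u * φ (z * u + s * w) ∂gaussianReal 0 1 =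
      φ u * (a * z ^ 3 * (u ^ 3 - 3 * u) + b * z ^ 2 * (u ^ 2 - 1) + c * z * u) := by
    rw [integral_const_mul]
    congr 1
    have h := integral_sextic_gaussianReal (φ (z * u))
      (a * (3 * (z * u) ^ 2 * s - 3 * s) + b * (2 * z * u * s) + c * s)
      (a * (3 * (z * u) * s ^ 2) + b * s ^ 2) (a * s ^ 3) 0 0 0
    calc _ = _ := by congr 1; ext w; simp only [hφ]; ring
      _ = _ := h
      _ = _ := by rw [hs, hφ]; ring
  rw [integral_prod _ hint]
  simp_rw [inner]
  have h := integral_sextic_gaussianReal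
    (b * (b * z ^ 2))
    (-(b * (c * z - 3 * (a * z ^ 3))) - (c - 3 * a) * (b * z ^ 2))
    ((c - 3 * a) * (c * z - 3 * (a * z ^ 3)) - 2 * b * (b * z ^ 2))
    (b * (c * z - 3 * (a * z ^ 3)) + (c - 3 * a) * (b * z ^ 2) - b * (a * z ^ 3) - a * (b * z ^ 2))
    (b * (b * z ^ 2) + (c - 3 * a) * (a * z ^ 3) + a * (c * z - 3 * (a * z ^ 3)))
    (b * (a * z ^ 3) + a * (b * z ^ 2))
    (a * (a * z ^ 3))
  calc _ = _ := by congr 1; ext u; rw [hφ]; ring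
    _ = _ := h
    _ = _ := by ring

/-- Corollary 1 of the paper (the case `d ≥ 2`): the activation
`φ(x) = 2^{-d/4}(x³-3x)/√6 + √(1-2·2^{-d/2})(x²-1)/√2 + 2^{-d/4}x` has dual activation
`f(z) = E[φ(u)φ(zu + √(1-z²)w)] = 2^{-d/2}z³ + (1-2·2^{-d/2})z² + 2^{-d/2}z`
(for `u, w` independent standard Gaussians and `z ∈ [-1,1]`); in particular the dual
activation satisfies `f(0) = 0`, `f(1) = 1`, `f'(0) = 2^{-d/2}`, `f'(1) = 2`, and
`-log f'(0)/log f'(1) = d/2`. -/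
theorem optimal_activation_dual_activation
    (d : ℕ) (hd : 2 ≤ d) (φ g : ℝ → ℝ)
    (hφ : ∀ x : ℝ, φ x =
      (2 : ℝ) ^ (-(d : ℝ) / 4) * ((x ^ 3 - 3 * x) / Real.sqrt 6) +
      Real.sqrt (1 - 2 * (2 : ℝ) ^ (-(d : ℝ) / 2)) * ((x ^ 2 - 1) / Real.sqrt 2) +
      (2 : ℝ) ^ (-(d : ℝ) / 4) * x)
    (hg : ∀ z : ℝ, g z =
      (2 : ℝ) ^ (-(d : ℝ) / 2) * z ^ 3 + (1 - 2 * (2 : ℝ) ^ (-(d : ℝ) / 2)) * z ^ 2 +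
      (2 : ℝ) ^ (-(d : ℝ) / 2) * z) :
    (∀ z ∈ Set.Icc (-1 : ℝ) 1,
      ∫ p : ℝ × ℝ, φ p.1 * φ (z * p.1 + Real.sqrt (1 - z ^ 2) * p.2)
          ∂((gaussianReal 0 1).prod (gaussianReal 0 1)) = g z) ∧
    g 0 = 0 ∧ g 1 = 1 ∧
    HasDerivAt g ((2 : ℝ) ^ (-(d : ℝ) / 2)) 0 ∧
    HasDerivAt g 2 1 ∧
    -Real.log ((2 : ℝ) ^ (-(d : ℝ) / 2)) / Real.log 2 = (d : ℝ) / 2 := by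
  have hpos : (0 : ℝ) ≤ 1 - 2 * (2 : ℝ) ^ (-(d : ℝ) / 2) := by
    have hd' : (2 : ℝ) ≤ d := by exact_mod_cast hd
    have h : (2 : ℝ) ^ (-(d : ℝ) / 2) ≤ (2 : ℝ) ^ (-1 : ℝ) :=
      Real.rpow_le_rpow_of_exponent_le one_le_two (by linarith)
    rw [Real.rpow_neg_one] at h
    linarith
  have hsq : ((2 : ℝ) ^ (-(d : ℝ) / 4)) ^ 2 = (2 : ℝ) ^ (-(d : ℝ) / 2) := by
    rw [← Real.rpow_mul_natCast zero_le_two]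
    congr 1
    push_cast
    ring
  have hlog : Real.log ((2 : ℝ) ^ (-(d : ℝ) / 2)) = -(d : ℝ) / 2 * Real.log 2 :=
    Real.log_rpow two_pos _
  have hlog2 : Real.log 2 ≠ 0 := (Real.log_pos one_lt_two).ne'
  set q := (2 : ℝ) ^ (-(d : ℝ) / 2)
  have hderiv (x : ℝ) : HasDerivAt g (3 * q * x ^ 2 + 2 * (1 - 2 * q) * x + q) x := by
    rw [funext hg]
    have h := (((hasDerivAt_pow 3 x).const_mul q).add
      ((hasDerivAt_pow 2 x).const_mul (1 - 2 * q))).add ((hasDerivAt_id x).const_mul q)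
    convert! h using 1
    push_cast
    ring
  refine ⟨fun z hz ↦ ?_, by rw [hg]; ring, by rw [hg]; ring, ?_, ?_, ?_⟩
  · rw [integral_hermite_combination_mul ((2 : ℝ) ^ (-(d : ℝ) / 4) / √6)
      (√(1 - 2 * q) / √2) ((2 : ℝ) ^ (-(d : ℝ) / 4)) z hz φ fun x ↦ by rw [hφ]; ring]
    rw [div_pow, div_pow, hsq, Real.sq_sqrt hpos, Real.sq_sqrt (by norm_num),
      Real.sq_sqrt (by norm_num), hg]
    ring
  · simpa using hderiv 0
  · convert hderiv 1 using 1
    ring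
  · rw [hlog]
    field_simp
end
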